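/- arXiv:2001.06085 — 7 statements merged into one kernel-verified Lean document; each statement's English description precedes it below -/
import Mathlib

section
/- Let α > 0 with α ≠ 1. For any log-concave probability density f on ℝ^n with finite sup-norm f_max, the α-Rényi entropy satisfies log(1/f_max) ≤ h_α(f) ≤ log(1/f_max) + n·log(α)/(α − 1). -/
/-!
Let `F ≥ 0` be integrable and log-concave. For `0 < l < 1` and a fixed point `y`,
log-concavity gives `F x ^ l * F y ^ (1 - l) ≤ F (l x + (1 - l) y)`; integrating in `x` and
changing variables yields `(∫ F ^ l) * F y ^ (1 - l) ≤ l ^ (-n) * ∫ F`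
(`integral_rpow_mul_le`). Taking the supremum over `y` gives the upper bound on the entropy:
for `α < 1` with `F = f`, `l = α`, and for `α > 1` with `F = f ^ α`, `l = 1 / α`.

The lower bound is the pointwise comparison of `f ^ α = f * f ^ (α - 1)` with
`f * fmax ^ (α - 1)`, integrated.
-/

open MeasureTheory

/-- A function `f` on `ℝ^n` is log-concave if `f(x) = exp(-g(x))` for some convex function
`g : ℝ^n → (-∞, ∞]`; the effective domain of `g` is encoded as a convex set `s` on which a
real-valued convex function `g` is given, with `f = 0` (i.e. `g = ∞`) outside `s`. -/
def IsLogConcave (n : ℕ) (f : (Fin n → ℝ) → ℝ) : Prop :=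
  ∃ (s : Set (Fin n → ℝ)) (g : (Fin n → ℝ) → ℝ),
    ConvexOn ℝ s g ∧ (∀ x ∈ s, f x = Real.exp (-g x)) ∧ ∀ x ∉ s, f x = 0

lemma IsLogConcave.nonneg {n : ℕ} {f : (Fin n → ℝ) → ℝ} (hf : IsLogConcave n f)
    (z : Fin n → ℝ) : 0 ≤ f z := by
  obtain ⟨s, g, hg, hs, hs'⟩ := hf
  by_cases hz : z ∈ s
  · rw [hs z hz]; positivity
  · rw [hs' z hz]

/-- The multiplicative form of log-concavity. It also holds when `x` or `y` lies outside the
support, because `0 ^ l = 0` for `l ≠ 0`. -/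
lemma IsLogConcave.mul_le {n : ℕ} {f : (Fin n → ℝ) → ℝ} (hf : IsLogConcave n f)
    {l : ℝ} (h0 : 0 < l) (h1 : l < 1) (x y : Fin n → ℝ) :
    f x ^ l * f y ^ (1 - l) ≤ f (l • x + (1 - l) • y) := by
  have hnn := hf.nonneg
  obtain ⟨s, g, hg, hs, hs'⟩ := hf
  have hl : 0 < 1 - l := by linarith
  by_cases hx : x ∈ s
  · by_cases hy : y ∈ s
    · have hm := hg.1 hx hy h0.le hl.le (by ring)
      have hc := hg.2 hx hy h0.le hl.le (by ring)
      rw [hs x hx, hs y hy, hs _ hm, ← Real.exp_mul, ← Real.exp_mul, ← Real.exp_add,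
        Real.exp_le_exp]
      simp only [smul_eq_mul] at hc
      linarith
    · rw [hs' y hy, Real.zero_rpow hl.ne', mul_zero]; exact hnn _
  · rw [hs' x hx, Real.zero_rpow h0.ne', zero_mul]; exact hnn _

lemma IsLogConcave.rpow {n : ℕ} {f : (Fin n → ℝ) → ℝ} (hf : IsLogConcave n f)
    {a : ℝ} (ha : 0 < a) : IsLogConcave n (fun x => f x ^ a) := by
  obtain ⟨s, g, hg, hs, hs'⟩ := hf
  refine ⟨s, fun x => a • g x, hg.smul ha.le, fun x hx => ?_, fun x hx => ?_⟩
  · simp only [hs x hx, ← Real.exp_mul, smul_eq_mul]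
    congr 1; ring
  · simp only [hs' x hx, Real.zero_rpow ha.ne']

/-- The change of variables `x ↦ l x + (1 - l) y` applied to the inequality of
`IsLogConcave.mul_le`. -/
lemma integral_rpow_mul_le {n : ℕ} {F : (Fin n → ℝ) → ℝ} (hF : IsLogConcave n F)
    (hi : Integrable F) {l : ℝ} (h0 : 0 < l) (h1 : l < 1) (y : Fin n → ℝ) (hy : 0 < F y) :
    Integrable (fun x => F x ^ l) ∧
      (∫ x, F x ^ l) * F y ^ (1 - l) ≤ (l ^ n)⁻¹ * ∫ x, F x := by
  have hi2 : Integrable (fun x => F (l • x + (1 - l) • y)) :=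
    (hi.comp_add_right ((1 - l) • y)).comp_smul h0.ne'
  have hval : ∫ x, F (l • x + (1 - l) • y) = (l ^ n)⁻¹ * ∫ x, F x := by
    rw [Measure.integral_comp_smul volume (fun x => F (x + (1 - l) • y)) l,
      integral_add_right_eq_self]
    simp [abs_of_pos h0]
  have hle := fun x => hF.mul_le h0 h1 x y
  have hi3 : Integrable (fun x => F x ^ l * F y ^ (1 - l)) := by
    refine hi2.mono' ?_ (ae_of_all _ fun x => ?_)
    · exact ((hi.aestronglyMeasurable.aemeasurable.pow_const l).mul_const _).aestronglyMeasurable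
    · rw [Real.norm_of_nonneg (mul_nonneg (Real.rpow_nonneg (hF.nonneg _) _)
        (Real.rpow_nonneg (hF.nonneg _) _))]
      exact hle x
  have hpos : 0 < F y ^ (1 - l) := Real.rpow_pos_of_pos hy _
  refine ⟨?_, ?_⟩
  · refine (hi3.mul_const (F y ^ (1 - l))⁻¹).congr (ae_of_all _ fun x => ?_)
    simp only
    rw [mul_assoc, mul_inv_cancel₀ hpos.ne', mul_one]
  · rw [← hval, ← integral_mul_const]
    exact integral_mono hi3 hi2 hle

/-- A bound on the powers of the positive values passes to the supremum. -/
lemma rpow_lub_le {ι : Type*} {f : ι → ℝ} {M p C : ℝ} (hM : IsLUB (Set.range f) M)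
    (hMpos : 0 < M) (hp : 0 < p) (hC : 0 < C) (h : ∀ y, 0 < f y → f y ^ p ≤ C) : M ^ p ≤ C := by
  have hb : M ≤ C ^ p⁻¹ := by
    refine hM.2 ?_
    rintro _ ⟨y, rfl⟩
    rcases le_or_gt (f y) 0 with hy | hy
    · exact hy.trans (Real.rpow_nonneg hC.le _)
    · exact (Real.le_rpow_inv_iff_of_pos hy.le hC.le hp).2 (h y hy)
  exact (Real.le_rpow_inv_iff_of_pos hMpos.le hC.le hp).1 hb

/-- For `α > 0`, `α ≠ 1`, and any log-concave probability density `f` on `ℝ^n` with finite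
sup-norm `f_max`, the α-Rényi entropy `h_α(f) = (1/(1-α)) log ∫ f^α` satisfies
`log(1/f_max) ≤ h_α(f) ≤ log(1/f_max) + n log α/(α-1)`. -/
theorem renyi_entropy_logconcave_bounds
    (n : ℕ) (α : ℝ) (hα : 0 < α) (hα1 : α ≠ 1)
    (f : (Fin n → ℝ) → ℝ) (fmax : ℝ)
    (hf_prob : (∫ x, f x) = 1)
    (hf : IsLogConcave n f)
    (hfmax : IsLUB (Set.range f) fmax) :
    Real.log (1 / fmax) ≤ (1 / (1 - α)) * Real.log (∫ x, f x ^ α) ∧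
      (1 / (1 - α)) * Real.log (∫ x, f x ^ α) ≤
        Real.log (1 / fmax) + n * Real.log α / (α - 1) := by
  have hi : Integrable f := by
    by_contra h
    rw [integral_undef h] at hf_prob
    exact zero_ne_one hf_prob
  have hnn := hf.nonneg
  have hle : ∀ x, f x ≤ fmax := fun x => hfmax.1 ⟨x, rfl⟩
  obtain ⟨y₀, hy₀⟩ : ∃ y, 0 < f y := by
    by_contra! h
    have hz : f = 0 := funext fun x => le_antisymm (h x) (hnn x)
    simp [hz] at hf_prob
  have hM : 0 < fmax := hy₀.trans_le (hle y₀)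
  have hαn : 0 < α ^ n := pow_pos hα n
  have hmeas : AEStronglyMeasurable (fun x => f x ^ α) :=
    (hi.aestronglyMeasurable.aemeasurable.pow_const α).aestronglyMeasurable
  have hsplit : ∀ x, 0 < f x → f x ^ α = f x * f x ^ (α - 1) := fun x hx => by
    rw [Real.rpow_sub_one hx.ne']; field_simp
  have hconst : ∫ x, f x * fmax ^ (α - 1) = fmax ^ (α - 1) := by
    rw [integral_mul_const, hf_prob, one_mul]
  have hMp : 0 < fmax ^ (α - 1) := Real.rpow_pos_of_pos hM _
  rw [one_div fmax, Real.log_inv]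
  rcases lt_or_gt_of_ne hα1 with h1 | h1
  · have hia := (integral_rpow_mul_le hf hi hα h1 y₀ hy₀).1
    have hlow : fmax ^ (α - 1) ≤ ∫ x, f x ^ α := by
      rw [← hconst]
      refine integral_mono (hi.mul_const _) hia fun x => ?_
      rcases (hnn x).eq_or_lt with hx | hx
      · simp [← hx, Real.zero_rpow hα.ne']
      · simp only [hsplit x hx]
        exact mul_le_mul_of_nonneg_left
          (Real.rpow_le_rpow_of_nonpos hx (hle x) (by linarith)) hx.le
    have hI : 0 < ∫ x, f x ^ α := hMp.trans_le hlow
    have hup : fmax ^ (1 - α) ≤ (α ^ n)⁻¹ / ∫ x, f x ^ α := by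
      refine rpow_lub_le hfmax hM (by linarith) (by positivity) fun y hy => ?_
      have := (integral_rpow_mul_le hf hi hα h1 y hy).2
      rw [hf_prob, mul_one] at this
      rw [le_div_iff₀ hI]; linarith
    have l1 := Real.log_le_log hMp hlow
    have l2 := Real.log_le_log (Real.rpow_pos_of_pos hM _) hup
    rw [Real.log_rpow hM] at l1 l2
    rw [Real.log_div (by positivity) hI.ne', Real.log_inv, Real.log_pow] at l2
    have hd : 0 < 1 - α := by linarith
    have e : (n : ℝ) * Real.log α / (α - 1) = -(n * Real.log α) / (1 - α) := by
      rw [← neg_sub 1 α, div_neg, neg_div]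
    rw [e, one_div, inv_mul_eq_div]
    constructor
    · rw [le_div_iff₀ hd]; linarith
    · rw [div_le_iff₀ hd, add_mul, div_mul_cancel₀ _ hd.ne']; linarith
  · have hd : 0 < α - 1 := by linarith
    have hpt : ∀ x, f x ^ α ≤ f x * fmax ^ (α - 1) := fun x => by
      rcases (hnn x).eq_or_lt with hx | hx
      · simp [← hx, Real.zero_rpow hα.ne']
      · rw [hsplit x hx]
        exact mul_le_mul_of_nonneg_left (Real.rpow_le_rpow hx.le (hle x) hd.le) hx.le
    have hia : Integrable (fun x => f x ^ α) := by
      refine (hi.mul_const (fmax ^ (α - 1))).mono' hmeas (ae_of_all _ fun x => ?_)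
      rw [Real.norm_of_nonneg (Real.rpow_nonneg (hnn x) _)]
      exact hpt x
    have hlow : ∫ x, f x ^ α ≤ fmax ^ (α - 1) := by
      rw [← hconst]
      exact integral_mono hia (hi.mul_const _) hpt
    -- Here `F = f ^ α` and `l = 1 / α`, so that `F ^ l = f` and `F y ^ (1 - l) = f y ^ (α - 1)`.
    have hkey : ∀ y, 0 < f y → f y ^ (α - 1) ≤ α ^ n * ∫ x, f x ^ α := fun y hy => by
      have := (integral_rpow_mul_le (hf.rpow hα) hia (inv_pos.2 hα) (inv_lt_one_of_one_lt₀ h1) y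
        (Real.rpow_pos_of_pos hy _)).2
      simp only [Real.rpow_rpow_inv (hnn _) hα.ne', hf_prob, one_mul] at this
      rw [← Real.rpow_mul hy.le, mul_sub, mul_one, mul_inv_cancel₀ hα.ne', inv_pow,
        inv_inv] at this
      exact this
    have hC : 0 < α ^ n * ∫ x, f x ^ α :=
      (Real.rpow_pos_of_pos hy₀ _).trans_le (hkey y₀ hy₀)
    have hI : 0 < ∫ x, f x ^ α := pos_of_mul_pos_right hC hαn.le
    have hup := rpow_lub_le hfmax hM hd hC hkey
    have l1 := Real.log_le_log hI hlow
    have l2 := Real.log_le_log hMp hup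
    rw [Real.log_rpow hM] at l1 l2
    rw [Real.log_mul hαn.ne' hI.ne', Real.log_pow] at l2
    have e : 1 / (1 - α) * Real.log (∫ x, f x ^ α) = -Real.log (∫ x, f x ^ α) / (α - 1) := by
      rw [← neg_sub α 1, one_div, inv_mul_eq_div, div_neg, neg_div]
    rw [e]
    constructor
    · rw [le_div_iff₀ hd]; linarith
    · rw [div_le_iff₀ hd, add_mul, div_mul_cancel₀ _ hd.ne']; linarith
end

section
/- For any log-concave probability density f on ℝ^n with finite sup-norm f_max and any threshold 0 < t < f_max, the truncated total probability satisfies t/f_max ≤ ∫_{ℝ^n} min{f(x), t} dx ≤ (t/f_max)·Σ_{k=0}^n (1/k!)·(log(f_max/t))^k, and the right-hand side is strictly less than 1. -/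
/-!
Write `M` for the supremum of `f` and `W s` for the volume of the superlevel set `{f > s}`. By the
layer-cake formula, `∫ min f t = ∫_0^t W` and `∫ f = ∫_0^∞ W = 1`.

The comparison function is `log (m / s) ^ n`, where `m = f x₀` is an attained value with `t < m`.
By log-concavity, contracting `{f > s}` towards `x₀` by the factor `log (m / s') / log (m / s)`
lands in `{f > s'}`, so `W s / log (m / s) ^ n` is nondecreasing in `s < m`
(`superlevel_volume_ratio`). Comparing both sides of the threshold `t` with the value of this
ratio at `t` shows that the share of the mass of `W` on `(0, m)` lying below `t` is at most the
corresponding share for `log (m / s) ^ n`. The latter has antiderivative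
`n! * s * ∑_{k ≤ n} log (m / s) ^ k / k!` (`poissonPrim`), so its share is
`(t / m) * ∑_{k ≤ n} log (m / t) ^ k / k!` (`integral_min_le`). Letting `m` tend to `M` gives the
upper bound, without assuming that the supremum is attained.

The lower bound is the pointwise inequality `min f t ≥ (t / M) * f`, and the last claim is the
strict inequality between `exp` and its Taylor polynomials at a positive argument.
-/

open MeasureTheory

/-! ### The integral of a power of the logarithm -/

/-- The antiderivative of `s ↦ log (m / s) ^ n / n!` that vanishes at `0`. -/
noncomputable def poissonPrim (n : ℕ) (m s : ℝ) : ℝ :=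
  s * ∑ k ∈ Finset.range (n + 1), (1 / (Nat.factorial k : ℝ)) * Real.log (m / s) ^ k

lemma hasDerivAt_poissonPrim (n : ℕ) {m s : ℝ} (hm : 0 < m) (hs : 0 < s) :
    HasDerivAt (poissonPrim n m) (1 / (Nat.factorial n : ℝ) * Real.log (m / s) ^ n) s := by
  have hlog : HasDerivAt (fun s => Real.log (m / s)) (-(1 / s)) s := by
    have h1 : HasDerivAt (fun s => m / s) (-m / s ^ 2) s := by
      have := (hasDerivAt_const s m).fun_div (hasDerivAt_id s) hs.ne'
      simpa using this
    have h2 := h1.log (div_pos hm hs).ne'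
    convert h2 using 1
    field_simp
  induction n with
  | zero =>
    have : poissonPrim 0 m = id := by
      funext s
      simp [poissonPrim]
    rw [this]
    simpa using hasDerivAt_id s
  | succ n ih =>
    have h : poissonPrim (n + 1) m = fun s => poissonPrim n m s +
        s * ((1 / (Nat.factorial (n + 1) : ℝ)) * Real.log (m / s) ^ (n + 1)) := by
      funext s
      unfold poissonPrim
      rw [Finset.sum_range_succ _ (n + 1), mul_add]
    rw [h]
    have h3 := ih.fun_add ((hasDerivAt_id s).fun_mul
      ((hlog.fun_pow (n + 1)).const_mul (1 / (Nat.factorial (n + 1) : ℝ))))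
    refine h3.congr_deriv ?_
    simp only [id, Nat.factorial_succ, Nat.add_sub_cancel]
    have : (Nat.factorial n : ℝ) ≠ 0 := by positivity
    push_cast
    field_simp
    ring

lemma tendsto_mul_log_div_pow (k : ℕ) {m : ℝ} (hm : 0 < m) :
    Filter.Tendsto (fun s => s * Real.log (m / s) ^ k) (nhdsWithin 0 (Set.Ioi 0)) (nhds 0) := by
  have h1 : Filter.Tendsto (fun s : ℝ => Real.log (m / s)) (nhdsWithin 0 (Set.Ioi 0))
      Filter.atTop := by
    refine Real.tendsto_log_atTop.comp ?_
    exact (tendsto_inv_nhdsGT_zero.const_mul_atTop hm).congr fun s => (div_eq_mul_inv m s).symm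
  have h2 := ((Real.tendsto_pow_mul_exp_neg_atTop_nhds_zero k).comp h1).const_mul m
  rw [mul_zero] at h2
  refine h2.congr' ?_
  filter_upwards [self_mem_nhdsWithin] with s hs
  have hs : 0 < s := hs
  simp only [Function.comp]
  rw [Real.exp_neg, Real.exp_log (div_pos hm hs)]
  field_simp

lemma continuousOn_poissonPrim (n : ℕ) {m : ℝ} (hm : 0 < m) :
    ContinuousOn (poissonPrim n m) (Set.Ici 0) := by
  intro s hs
  rcases (show (0 : ℝ) ≤ s from hs).eq_or_lt with rfl | hs
  · rw [← continuousWithinAt_Ioi_iff_Ici]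
    have h0 : poissonPrim n m 0 = 0 := by simp [poissonPrim]
    unfold ContinuousWithinAt
    rw [h0]
    have h := tendsto_finsetSum (Finset.range (n + 1)) fun k _ =>
      (tendsto_mul_log_div_pow k hm).const_mul (1 / (Nat.factorial k : ℝ))
    simp only [mul_zero, Finset.sum_const_zero] at h
    refine h.congr fun s => ?_
    simp only [poissonPrim, Finset.mul_sum]
    exact Finset.sum_congr rfl fun k _ => by ring
  · exact (hasDerivAt_poissonPrim n hm hs).continuousAt.continuousWithinAt

lemma log_pow_integral (n : ℕ) {m a b : ℝ} (ha : 0 ≤ a) (hab : a ≤ b) (hbm : b ≤ m)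
    (hm : 0 < m) :
    IntervalIntegrable (fun s => 1 / (Nat.factorial n : ℝ) * Real.log (m / s) ^ n) volume a b ∧
    ∫ s in a..b, 1 / (Nat.factorial n : ℝ) * Real.log (m / s) ^ n
      = poissonPrim n m b - poissonPrim n m a := by
  have hc : ContinuousOn (poissonPrim n m) (Set.Icc a b) :=
    (continuousOn_poissonPrim n hm).mono fun x hx => ha.trans hx.1
  have hd : ∀ x ∈ Set.Ioo a b, HasDerivAt (poissonPrim n m)
      (1 / (Nat.factorial n : ℝ) * Real.log (m / x) ^ n) x := fun x hx =>
    hasDerivAt_poissonPrim n hm (ha.trans_lt hx.1)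
  have hi : IntervalIntegrable (fun s => 1 / (Nat.factorial n : ℝ) * Real.log (m / s) ^ n)
      volume a b := by
    apply intervalIntegral.intervalIntegrable_deriv_of_nonneg (g := poissonPrim n m)
    · rwa [Set.uIcc_of_le hab]
    · rwa [min_eq_left hab, max_eq_right hab]
    · rw [min_eq_left hab, max_eq_right hab]
      intro x hx
      have hx0 : 0 < x := ha.trans_lt hx.1
      have : 0 ≤ Real.log (m / x) :=
        Real.log_nonneg ((one_le_div hx0).2 (hx.2.le.trans hbm))
      positivity
  exact ⟨hi, intervalIntegral.integral_eq_sub_of_hasDerivAt_of_le hab hc hd hi⟩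

/-! ### Volumes of superlevel sets -/

/-- Contracting a superlevel set towards a point `x₀` with `f x₀ = m` by the factor
`log (m / s') / log (m / s)` maps `{f > s}` into `{f > s'}`; hence the ratio of the volume of
`{f > s}` to `log (m / s) ^ n` is nondecreasing in `s < m`. -/
lemma superlevel_volume_ratio {n : ℕ} {f : (Fin n → ℝ) → ℝ} (hf : IsLogConcave n f)
    (hint : Integrable f) {x₀ : Fin n → ℝ} {s s' : ℝ} (hs : 0 < s) (hss' : s < s')
    (hs' : s' < f x₀) :
    Real.log (f x₀ / s') ^ n * volume.real {x | s < f x} ≤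
      Real.log (f x₀ / s) ^ n * volume.real {x | s' < f x} := by
  obtain ⟨D, g, hg, hfD, hf0⟩ := hf
  have hs'0 : 0 < s' := hs.trans hss'
  have hm : 0 < f x₀ := hs'0.trans hs'
  have hD : ∀ y, 0 < f y → y ∈ D := fun y hy => by
    by_contra h
    exact hy.ne' (hf0 y h)
  have hL' : 0 < Real.log (f x₀ / s') := Real.log_pos ((one_lt_div hs'0).2 hs')
  have hL : 0 < Real.log (f x₀ / s) := Real.log_pos ((one_lt_div hs).2 (hss'.trans hs'))
  have hLL : Real.log (f x₀ / s') ≤ Real.log (f x₀ / s) := by gcongr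
  set c := Real.log (f x₀ / s') / Real.log (f x₀ / s) with hc
  have hc0 : 0 < c := div_pos hL' hL
  have hc1 : c ≤ 1 := (div_le_one hL).2 hLL
  have hcL : c * Real.log (f x₀ / s) = Real.log (f x₀ / s') := div_mul_cancel₀ _ hL.ne'
  have hsub : AffineMap.homothety x₀ c '' {x | s < f x} ⊆ {x | s' < f x} := by
    rintro _ ⟨y, hy, rfl⟩
    have hy : s < f y := hy
    have hyD := hD y (hs.trans hy)
    have hxD := hD x₀ hm
    have hz : AffineMap.homothety x₀ c y = (1 - c) • x₀ + c • y := by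
      rw [AffineMap.homothety_apply, vsub_eq_sub, vadd_eq_add]
      module
    have hzD := hg.1 hxD hyD (sub_nonneg.2 hc1) hc0.le (by ring)
    have hgz := hg.2 hxD hyD (sub_nonneg.2 hc1) hc0.le (by ring)
    simp only [smul_eq_mul] at hgz
    show s' < f _
    rw [hz, hfD _ hzD, ← Real.log_lt_iff_lt_exp hs'0]
    have hgx : g x₀ = -Real.log (f x₀) := by
      rw [hfD _ hxD, Real.log_exp, neg_neg]
    have hgy : Real.log s < -g y := by
      rw [Real.log_lt_iff_lt_exp hs, ← hfD _ hyD]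
      exact hy
    rw [Real.log_div hm.ne' hs.ne', Real.log_div hm.ne' hs'0.ne'] at hcL
    rw [hgx] at hgz
    nlinarith [mul_lt_mul_of_pos_left hgy hc0]
  have hfin : volume {x | s' < f x} ≠ ⊤ := (hint.measure_gt_lt_top hs'0).ne
  have hv := measureReal_mono (μ := volume) hsub hfin
  rw [Measure.real, Measure.addHaar_image_homothety, ENNReal.toReal_mul,
    ENNReal.toReal_ofReal (abs_nonneg _), Module.finrank_fin_fun,
    abs_of_pos (pow_pos hc0 n), hc, div_pow, ← Measure.real] at hv
  rwa [div_mul_eq_mul_div, div_le_iff₀ (pow_pos hL n), mul_comm (volume.real _)] at hv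

lemma integral_min_eq {n : ℕ} {f : (Fin n → ℝ) → ℝ} (hf0 : ∀ x, 0 ≤ f x)
    (hint : Integrable f) {t : ℝ} (ht : 0 < t) :
    Integrable (fun x => min (f x) t) ∧
      ∫ x, min (f x) t = ∫ s in 0..t, volume.real {x | s < f x} := by
  have hmin : Integrable (fun x => min (f x) t) := by
    refine hint.mono (hint.1.inf aestronglyMeasurable_const) (Filter.Eventually.of_forall fun x => ?_)
    rw [Real.norm_of_nonneg (le_min (hf0 x) ht.le), Real.norm_of_nonneg (hf0 x)]
    exact min_le_left _ _
  refine ⟨hmin, ?_⟩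
  rw [hmin.integral_eq_integral_meas_lt
    (Filter.Eventually.of_forall fun x => le_min (hf0 x) ht.le)]
  have h : ∀ s, volume.real {x | s < min (f x) t} =
      (Set.Iio t).indicator (fun s => volume.real {x | s < f x}) s := by
    intro s
    by_cases hst : s < t <;> simp [hst]
  simp only [h]
  rw [setIntegral_indicator measurableSet_Iio, Set.Ioi_inter_Iio,
    intervalIntegral.integral_of_le ht.le, integral_Ioc_eq_integral_Ioo]

/-! ### The truncated integral -/

/-- The upper bound with the supremum replaced by an attained value `f x₀ > t`. -/
lemma integral_min_le {n : ℕ} {f : (Fin n → ℝ) → ℝ} (hf : IsLogConcave n f)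
    (hf0 : ∀ x, 0 ≤ f x) (hint : Integrable f) (hf_prob : (∫ x, f x) = 1)
    {x₀ : Fin n → ℝ} {t : ℝ} (ht : 0 < t) (htx : t < f x₀) :
    (∫ x, min (f x) t) ≤ poissonPrim n (f x₀) t / f x₀ := by
  set m := f x₀ with hm_def
  have hm : 0 < m := ht.trans htx
  set W : ℝ → ℝ := fun s => volume.real {x | s < f x} with hW
  have hW0 : ∀ s, 0 ≤ W s := fun s => measureReal_nonneg
  have hlayer : ∫ s in Set.Ioi 0, W s = 1 := by
    rw [← hf_prob, hint.integral_eq_integral_meas_lt (Filter.Eventually.of_forall hf0)]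
  have hWint : IntegrableOn W (Set.Ioi 0) := by
    by_contra h
    rw [integral_undef h] at hlayer
    exact zero_ne_one hlayer
  have hi1 : IntervalIntegrable W volume 0 t :=
    (intervalIntegrable_iff_integrableOn_Ioc_of_le ht.le).2
      (hWint.mono_set Set.Ioc_subset_Ioi_self)
  have hi2 : IntervalIntegrable W volume t m :=
    (intervalIntegrable_iff_integrableOn_Ioc_of_le htx.le).2
      (hWint.mono_set fun x hx => ht.trans hx.1)
  rw [(integral_min_eq hf0 hint ht).2]
  have hAB : (∫ s in 0..t, W s) + ∫ s in t..m, W s ≤ 1 := by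
    rw [intervalIntegral.integral_add_adjacent_intervals hi1 hi2,
      intervalIntegral.integral_of_le hm.le, ← hlayer]
    exact setIntegral_mono_set hWint (Filter.Eventually.of_forall hW0)
      Set.Ioc_subset_Ioi_self.eventuallyLE
  obtain ⟨hj1, hk1⟩ := log_pow_integral n le_rfl ht.le htx.le hm
  obtain ⟨hj2, hk2⟩ := log_pow_integral n ht.le htx.le le_rfl hm
  have hP0 : poissonPrim n m 0 = 0 := by simp [poissonPrim]
  have hPm : poissonPrim n m m = m := by
    simp [poissonPrim, hm.ne', Finset.sum_range_succ']
  have hL : 0 < Real.log (m / t) ^ n := pow_pos (Real.log_pos ((one_lt_div ht).2 htx)) n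
  have hfac : (0 : ℝ) < Nat.factorial n := by positivity
  have hA : Real.log (m / t) ^ n * (∫ s in 0..t, W s) ≤
      (W t * Nat.factorial n) * poissonPrim n m t := by
    have := intervalIntegral.integral_mono_on_of_le_Ioo ht.le (hi1.const_mul (Real.log (m / t) ^ n))
      (hj1.const_mul (W t * Nat.factorial n)) (fun s hs => by
        have := superlevel_volume_ratio hf hint hs.1 hs.2 htx
        refine this.trans (le_of_eq ?_)
        rw [← hm_def]
        simp only [hW]
        field_simp)
    rwa [intervalIntegral.integral_const_mul, intervalIntegral.integral_const_mul, hk1, hP0,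
      sub_zero] at this
  have hB : (W t * Nat.factorial n) * (m - poissonPrim n m t) ≤
      Real.log (m / t) ^ n * (∫ s in t..m, W s) := by
    have := intervalIntegral.integral_mono_on_of_le_Ioo htx.le
      (hj2.const_mul (W t * Nat.factorial n)) (hi2.const_mul (Real.log (m / t) ^ n))
      (fun s hs => by
        have := superlevel_volume_ratio hf hint ht hs.1 hs.2
        refine (le_of_eq ?_).trans this
        rw [← hm_def]
        simp only [hW]
        field_simp)
    rwa [intervalIntegral.integral_const_mul, hk2, hPm,
      intervalIntegral.integral_const_mul] at this
  have hP : 0 ≤ poissonPrim n m t := by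
    have : 0 ≤ Real.log (m / t) := Real.log_nonneg ((one_le_div ht).2 htx.le)
    unfold poissonPrim
    positivity
  have hPle : 0 ≤ m - poissonPrim n m t := by
    rw [hPm] at hk2
    rw [← hk2]
    refine intervalIntegral.integral_nonneg htx.le fun s hs => ?_
    have : 0 ≤ Real.log (m / s) :=
      Real.log_nonneg ((one_le_div (ht.trans_le hs.1)).2 hs.2)
    positivity
  rw [le_div_iff₀ hm]
  generalize poissonPrim n m t = P at *
  generalize (∫ s in 0..t, W s) = A at *
  generalize (∫ s in t..m, W s) = B at *
  have h1 : Real.log (m / t) ^ n * (A * (m - P)) ≤ Real.log (m / t) ^ n * (P * B) := by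
    nlinarith [mul_le_mul_of_nonneg_right hA hPle, mul_le_mul_of_nonneg_left hB hP]
  have h2 := le_of_mul_le_mul_left h1 hL
  nlinarith [mul_le_mul_of_nonneg_left hAB hP]

/-- For any log-concave probability density `f` on `ℝ^n` with finite sup-norm `f_max` and
any threshold `0 < t < f_max`, the truncated total probability satisfies
`t/f_max ≤ ∫ min{f, t} ≤ (t/f_max) ∑_{k=0}^n (log(f_max/t))^k / k!`, and the right-hand
side (the CDF at `n` of a Poisson with rate `log(f_max/t)`) is strictly less than 1. -/
theorem truncated_probability_logconcave
    (n : ℕ) (f : (Fin n → ℝ) → ℝ) (fmax t : ℝ)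
    (hf_prob : (∫ x, f x) = 1)
    (hf : IsLogConcave n f)
    (hfmax : IsLUB (Set.range f) fmax)
    (ht : 0 < t) (htf : t < fmax) :
    t / fmax ≤ (∫ x, min (f x) t) ∧
      (∫ x, min (f x) t) ≤
        t / fmax * ∑ k ∈ Finset.range (n + 1),
          (1 / (Nat.factorial k : ℝ)) * Real.log (fmax / t) ^ k ∧
      t / fmax * ∑ k ∈ Finset.range (n + 1),
          (1 / (Nat.factorial k : ℝ)) * Real.log (fmax / t) ^ k < 1 := by
  have hM : 0 < fmax := ht.trans htf
  have hf0 : ∀ x, 0 ≤ f x := by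
    obtain ⟨D, g, -, h1, h2⟩ := hf
    intro x
    by_cases hx : x ∈ D
    · rw [h1 x hx]
      positivity
    · rw [h2 x hx]
  have hint : Integrable f := by
    by_contra h
    rw [integral_undef h] at hf_prob
    exact zero_ne_one hf_prob
  have hfle : ∀ x, f x ≤ fmax := fun x => hfmax.1 ⟨x, rfl⟩
  refine ⟨?_, ?_, ?_⟩
  · calc t / fmax = ∫ x, t / fmax * f x := by rw [integral_const_mul, hf_prob, mul_one]
      _ ≤ ∫ x, min (f x) t := by
        refine integral_mono (hint.const_mul _) (integral_min_eq hf0 hint ht).1 fun x => ?_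
        refine le_min ?_ ?_
        · exact mul_le_of_le_one_left (hf0 x) ((div_le_one hM).2 htf.le)
        · rw [div_mul_eq_mul_div, div_le_iff₀ hM]
          exact mul_le_mul_of_nonneg_left (hfle x) ht.le
  -- The supremum need not be attained, so the bound is passed to the limit along values of `f`.
  · by_contra! hlt
    have hcont : ContinuousAt (fun m => t / m * ∑ k ∈ Finset.range (n + 1),
        (1 / (Nat.factorial k : ℝ)) * Real.log (m / t) ^ k) fmax := by
      have : fmax / t ≠ 0 := (div_pos hM ht).ne'
      have := hM.ne'
      fun_prop (disch := assumption)
    have hev := (hcont.eventually_lt_const hlt).and (lt_mem_nhds htf)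
    obtain ⟨_, ⟨x₀, rfl⟩, hx1, hx2⟩ := ((hfmax.frequently_mem ⟨_, 0, rfl⟩).and_eventually
      (hev.filter_mono nhdsWithin_le_nhds)).exists
    have := integral_min_le hf hf0 hint hf_prob ht hx2
    rw [poissonPrim, mul_div_right_comm] at this
    exact absurd hx1 this.not_gt
  · have hpos : 0 < Real.log (fmax / t) := Real.log_pos ((one_lt_div ht).2 htf)
    have h := Real.sum_le_exp_of_nonneg hpos.le (n + 2)
    rw [Finset.sum_range_succ, Real.exp_log (div_pos hM ht)] at h
    have h2 : 0 < Real.log (fmax / t) ^ (n + 1) / (Nat.factorial (n + 1) : ℝ) := by positivity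
    have h3 : ∑ k ∈ Finset.range (n + 1), (1 / (Nat.factorial k : ℝ)) * Real.log (fmax / t) ^ k
        < fmax / t := by
      simp only [one_div_mul_eq_div]
      linarith
    calc _ < t / fmax * (fmax / t) := mul_lt_mul_of_pos_left h3 (div_pos ht hM)
      _ = 1 := by field_simp
end

section
/- Let β ≥ n+1 be an integer. For any β-concave probability density f on ℝ^n with finite sup-norm f_max and any threshold 0 < t < f_max, writing p = 1 − (t/f_max)^{1/β}, the truncated total probability satisfies t/f_max ≤ ∫_{ℝ^n} min{f(x), t} dx ≤ Σ_{k=0}^n C(β,k)·p^k·(1−p)^{β−k}, and the right-hand side (the CDF at n of a Binomial(β, p) random variable) is strictly less than 1. -/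
/-!
Write `f = g ^ (-β)` with `g` convex, normalise `h = (f / f_max) ^ (1/β) ∈ [0, 1]`, and let
`U q` be the volume of `{q ≤ h}`. On the support of `f`, `h = c / g`, where `c` is the infimum
of `g`.

Comparison of level sets. A homothety centred at a near-minimiser of `g`, of ratio slightly
below `a (1 - b) / (b (1 - a))`, maps `{a ≤ h}` into `{b ≤ h}` for `0 < a ≤ b < 1`, by convexity
alone. Letting the centre approach the infimum of `g` shows that `U q * (q / (1 - q)) ^ n` is
nondecreasing in `q` (`levelset_ratio_mono`).

Layer cake. With `q₀ = (t / f_max) ^ (1/β) = 1 - p`, the integral of `f` is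
`∫ U q * f_max * β * q ^ (β - 1)` over `(0, 1]`, and truncating `f` at `t` restricts this integral
to `(0, q₀]`. By the monotonicity, the integrand divided by `(1 - q) ^ n * q ^ (β - n - 1)` is
nondecreasing, so the truncated fraction is at most the corresponding fraction for that weight.
The weight is, up to a constant, the derivative of the binomial CDF in `q`
(`hasDerivAt_binomCDF`), and this CDF runs from `0` at `q = 0` to `1` at `q = 1`.

The lower bound is the pointwise inequality `min f t ≥ (t / f_max) f`.
-/

open MeasureTheory

/-- A function `f` on `ℝ^n` is β-concave (β > 0) if `f(x) = g(x)^{-β}` for some convex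
function `g : ℝ^n → (0, ∞]`; the effective domain of `g` is encoded as a convex set `s` on
which a positive real-valued convex function `g` is given, with `f = 0` outside `s`. -/
def IsBetaConcave (n : ℕ) (β : ℝ) (f : (Fin n → ℝ) → ℝ) : Prop :=
  ∃ (s : Set (Fin n → ℝ)) (g : (Fin n → ℝ) → ℝ),
    ConvexOn ℝ s g ∧ (∀ x ∈ s, 0 < g x ∧ f x = g x ^ (-β)) ∧ ∀ x ∉ s, f x = 0

/-! ### Level sets of convex functions -/

/-- A homothety about a point of height at most `v` maps one sublevel set of a convex function
into another. The sets need not be measurable: the Haar scaling rule holds for all sets. -/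
lemma levelset_scaling {n : ℕ} {s : Set (Fin n → ℝ)} {g : (Fin n → ℝ) → ℝ}
    (hg : ConvexOn ℝ s g) {x₀ : Fin n → ℝ} (hx₀ : x₀ ∈ s) {v u u' r : ℝ} (hv : g x₀ ≤ v)
    (hr0 : 0 ≤ r) (hr1 : r ≤ 1) (hr : (1 - r) * v + r * u' ≤ u) :
    ENNReal.ofReal (r ^ n) * volume {x | x ∈ s ∧ g x ≤ u'} ≤ volume {x | x ∈ s ∧ g x ≤ u} := by
  have h := Measure.addHaar_image_homothety (volume : Measure (Fin n → ℝ)) x₀ r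
    {x | x ∈ s ∧ g x ≤ u'}
  rw [Module.finrank_fin_fun, abs_of_nonneg (by positivity)] at h
  rw [← h]
  apply measure_mono
  rintro _ ⟨x, ⟨hxs, hxg⟩, rfl⟩
  have e : AffineMap.homothety x₀ r x = (1 - r) • x₀ + r • x := by
    rw [AffineMap.homothety_apply]
    simp only [vsub_eq_sub, vadd_eq_add]
    module
  rw [e]
  refine ⟨hg.1 hx₀ hxs (by linarith) hr0 (by ring), ?_⟩
  have h2 := hg.2 hx₀ hxs (show (0 : ℝ) ≤ 1 - r by linarith) hr0 (by ring)
  simp only [smul_eq_mul] at h2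
  have h3 : (1 - r) * g x₀ ≤ (1 - r) * v := mul_le_mul_of_nonneg_left hv (by linarith)
  have h4 : r * g x ≤ r * u' := mul_le_mul_of_nonneg_left hxg hr0
  linarith

/-- If `inf g ≤ c` (hypothesis `hinf`), the volume of `{g ≤ c / q}` times `(q / (1 - q)) ^ n` is nondecreasing in
`q ∈ (0, 1)`; written without division. The infimum of `g` need not be attained. -/
lemma levelset_ratio_mono {n : ℕ} {s : Set (Fin n → ℝ)} {g : (Fin n → ℝ) → ℝ}
    (hg : ConvexOn ℝ s g) {c a b : ℝ} (ha : 0 < a) (hab : a ≤ b) (hb : b < 1)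
    (hinf : ∀ η : ℝ, 0 < η → η < 1 → ∃ x ∈ s, g x ≤ c / η)
    (hfin : volume {x | x ∈ s ∧ g x ≤ c / b} ≠ ⊤) :
    (volume {x | x ∈ s ∧ g x ≤ c / a}).toReal * (a * (1 - b)) ^ n ≤
      (volume {x | x ∈ s ∧ g x ≤ c / b}).toReal * (b * (1 - a)) ^ n := by
  have hb0 : 0 < b := ha.trans_le hab
  -- The homothety is centred at a point of height at most `c / η`; then `η → 1`.
  have key : ∀ η ∈ Set.Ioo b 1,
      (volume {x | x ∈ s ∧ g x ≤ c / a}).toReal * (a * (η - b)) ^ n ≤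
      (volume {x | x ∈ s ∧ g x ≤ c / b}).toReal * (b * (η - a)) ^ n := by
    rintro η ⟨h1, h2⟩
    obtain ⟨x₀, hx₀, hgx⟩ := hinf η (hb0.trans h1) h2
    have hη : 0 < η := hb0.trans h1
    have hd : 0 < b * (η - a) := mul_pos hb0 (by linarith)
    have hda : η - a ≠ 0 := by linarith
    have hsc := levelset_scaling (u := c / b) (u' := c / a) (r := a * (η - b) / (b * (η - a)))
      hg hx₀ hgx (div_nonneg (mul_nonneg ha.le (by linarith)) hd.le)
      ((div_le_one hd).2 (by nlinarith)) (le_of_eq (by field_simp; ring))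
    have hr := ENNReal.toReal_mono hfin hsc
    rw [ENNReal.toReal_mul, ENNReal.toReal_ofReal (pow_nonneg
      (div_nonneg (mul_nonneg ha.le (by linarith)) hd.le) _), div_pow, div_mul_eq_mul_div,
      div_le_iff₀ (pow_pos hd n)] at hr
    linarith
  have hne : (nhdsWithin (1 : ℝ) (Set.Ioo b 1)).NeBot := by
    rw [nhdsWithin_Ioo_eq_nhdsLT hb]; infer_instance
  refine le_of_tendsto_of_tendsto (b := nhdsWithin (1 : ℝ) (Set.Ioo b 1)) ?_ ?_
    (Filter.eventually_of_mem self_mem_nhdsWithin key)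
  · exact (Continuous.tendsto (by fun_prop) 1).mono_left nhdsWithin_le_nhds
  · exact (Continuous.tendsto (by fun_prop) 1).mono_left nhdsWithin_le_nhds

/-! ### The binomial CDF as an incomplete beta integral -/

/-- The CDF at `n` of a `Binomial(β, 1 - q)` variable, as a function of the failure
probability `q`. -/
noncomputable def binomCDF (β n : ℕ) (q : ℝ) : ℝ :=
  ∑ k ∈ Finset.range (n + 1), (β.choose k : ℝ) * (1 - q) ^ k * q ^ (β - k)

/-- The derivatives of consecutive binomial terms telescope, which leaves a single beta
weight. -/
lemma hasDerivAt_binomCDF (β n : ℕ) (h : n + 1 ≤ β) (q : ℝ) :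
    HasDerivAt (binomCDF β n)
      (((β - n : ℕ) : ℝ) * β.choose n * ((1 - q) ^ n * q ^ (β - n - 1))) q := by
  induction n with
  | zero =>
    have : binomCDF β 0 = fun q => q ^ β := by funext x; simp [binomCDF]
    rw [this]
    simpa using hasDerivAt_pow β q
  | succ n ih =>
    have : binomCDF β (n + 1) = fun q => binomCDF β n q +
        (β.choose (n + 1) : ℝ) * (1 - q) ^ (n + 1) * q ^ (β - (n + 1)) := by
      funext x; simp only [binomCDF]; rw [Finset.sum_range_succ _ (n + 1)]
    rw [this]
    have h1 : HasDerivAt (fun q : ℝ => (β.choose (n + 1) : ℝ) * (1 - q) ^ (n + 1)) _ q :=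
      ((((hasDerivAt_id q).const_sub 1).pow (n + 1)).const_mul (β.choose (n + 1) : ℝ))
    have h2 := (ih (by omega)).add (h1.mul (hasDerivAt_pow (β - (n + 1)) q))
    refine h2.congr_deriv ?_
    have hc : ((β.choose (n + 1) : ℝ)) * (n + 1) = β.choose n * ((β - n : ℕ) : ℝ) := by
      exact_mod_cast Nat.choose_succ_right_eq β n
    have e : β - n - 1 = β - (n + 1) := by omega
    simp only [id, Nat.add_sub_cancel, e, Nat.cast_add, Nat.cast_one]
    linear_combination (-(1 - q) ^ n * q ^ (β - (n + 1))) * hc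

lemma binomCDF_zero (β n : ℕ) (h : n + 1 ≤ β) : binomCDF β n 0 = 0 := by
  apply Finset.sum_eq_zero
  intro k hk
  rw [Finset.mem_range] at hk
  rw [zero_pow (by omega)]; simp

lemma binomCDF_one (β n : ℕ) : binomCDF β n 1 = 1 := by
  simp [binomCDF, Finset.sum_range_succ']

lemma binomCDF_lt_one (β n : ℕ) (h : n + 1 ≤ β) {q : ℝ} (h0 : 0 < q) (h1 : q < 1) :
    binomCDF β n q < 1 := by
  have hb : ∑ k ∈ Finset.range (β + 1), (β.choose k : ℝ) * (1 - q) ^ k * q ^ (β - k) = 1 := by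
    have := add_pow (1 - q) q β
    rw [sub_add_cancel, one_pow] at this
    exact (Finset.sum_congr rfl fun k _ => by ring).trans this.symm
  have hq : 0 < 1 - q := by linarith
  rw [← hb]
  apply Finset.sum_lt_sum_of_subset (i := β) (Finset.range_mono (by omega)) (by simp)
    (by simp; omega)
  · rw [Nat.choose_self]; positivity
  · intro j _ _; positivity

lemma lintegral_binomCDF (β n : ℕ) (h : n + 1 ≤ β) {a b K : ℝ} (ha : 0 ≤ a) (hab : a ≤ b)
    (hb : b ≤ 1) (hK : 0 ≤ K) :
    ∫⁻ q in Set.Ioo a b, ENNReal.ofReal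
      (K * (((β - n : ℕ) : ℝ) * β.choose n * ((1 - q) ^ n * q ^ (β - n - 1)))) =
      ENNReal.ofReal (K * (binomCDF β n b - binomCDF β n a)) := by
  have hc : Continuous fun q : ℝ =>
      K * (((β - n : ℕ) : ℝ) * β.choose n * ((1 - q) ^ n * q ^ (β - n - 1))) := by fun_prop
  rw [← ofReal_integral_eq_lintegral_ofReal]
  · rw [← integral_Ioc_eq_integral_Ioo, ← intervalIntegral.integral_of_le hab,
      intervalIntegral.integral_eq_sub_of_hasDerivAt
        (fun x _ => (hasDerivAt_binomCDF β n h x).const_mul K) (hc.intervalIntegrable _ _)]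
    congr 1; ring
  · exact (hc.integrableOn_Icc (a := a) (b := b)).mono_set Set.Ioo_subset_Icc_self
  · refine (ae_restrict_iff' measurableSet_Ioo).2 (ae_of_all _ fun q hq => ?_)
    have : 0 < q := ha.trans_lt hq.1
    have : 0 ≤ 1 - q := by linarith [hq.2]
    simp only [Pi.zero_apply]
    positivity


/-! ### Layer cake and the upper bound -/

lemma lintegral_layercake_pow {n : ℕ} {h : (Fin n → ℝ) → ℝ} (hm : AEMeasurable h)
    (h0 : ∀ x, 0 ≤ h x) (M : ℝ) (hM : 0 ≤ M) (β : ℕ) (hβ : β ≠ 0) :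
    ∫⁻ x, ENNReal.ofReal (M * h x ^ β) =
      ∫⁻ q in Set.Ioi 0, volume {x | q ≤ h x} * ENNReal.ofReal (M * (β * q ^ (β - 1))) := by
  have hc : Continuous fun q : ℝ => M * (β * q ^ (β - 1)) := by fun_prop
  rw [← lintegral_comp_eq_lintegral_meas_le_mul volume (ae_of_all _ h0) hm
    (fun _ _ => hc.intervalIntegrable _ _)]
  · refine lintegral_congr fun x => ?_
    rw [intervalIntegral.integral_eq_sub_of_hasDerivAt
        (fun y _ => (hasDerivAt_pow β y).const_mul M) (hc.intervalIntegrable _ _)]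
    simp [hβ]
  · refine (ae_restrict_iff' measurableSet_Ioi).2 (ae_of_all _ fun q hq => ?_)
    have : (0 : ℝ) < q := hq
    positivity

/-- The upper bound of the theorem, in terms of `q₀ = 1 - p`. -/
lemma upper_bound
    (n β : ℕ) (hβ : n + 1 ≤ β)
    (f : (Fin n → ℝ) → ℝ) (fmax t q₀ : ℝ)
    (hf_prob : (∫ x, f x) = 1) (hint : Integrable f)
    (hf : IsBetaConcave n (β : ℝ) f)
    (hf0 : ∀ x, 0 ≤ f x)
    (hfmax : IsLUB (Set.range f) fmax)
    (ht : 0 < t) (htf : t < fmax)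
    (hq : q₀ = (t / fmax) ^ ((β : ℝ)⁻¹)) (hq0 : 0 < q₀) (hq1 : q₀ < 1) :
    (∫ x, min (f x) t) ≤ binomCDF β n q₀ := by
  have hM : 0 < fmax := ht.trans htf
  have hβ0 : β ≠ 0 := by omega
  have hβpos : (0 : ℝ) < β := by exact_mod_cast Nat.pos_of_ne_zero hβ0
  obtain ⟨s, g, hg, hs, hns⟩ := hf
  set h : (Fin n → ℝ) → ℝ := fun x => (f x / fmax) ^ ((β : ℝ)⁻¹) with hh
  have hh0 : ∀ x, 0 ≤ h x := fun x => Real.rpow_nonneg (div_nonneg (hf0 x) hM.le) _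
  have hhm : AEMeasurable h := (hint.aemeasurable.div_const _).pow_const _
  have hpow : ∀ x, fmax * h x ^ β = f x := fun x => by
    rw [hh]; dsimp only
    rw [Real.rpow_inv_natCast_pow (div_nonneg (hf0 x) hM.le) hβ0]; field_simp
  have hqpow : fmax * q₀ ^ β = t := by
    rw [hq, Real.rpow_inv_natCast_pow (by positivity) hβ0]; field_simp
  set c : ℝ := (fmax ^ ((β : ℝ)⁻¹))⁻¹ with hc
  have hhg : ∀ x ∈ s, h x = c / g x := fun x hx => by
    obtain ⟨hgx, hfx⟩ := hs x hx
    rw [hh]; dsimp only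
    rw [hfx, Real.div_rpow (Real.rpow_nonneg hgx.le _) hM.le, ← Real.rpow_mul hgx.le,
      show -(β : ℝ) * (β : ℝ)⁻¹ = -1 by field_simp, Real.rpow_neg_one, hc]
    ring
  have hhs : ∀ x ∉ s, h x = 0 := fun x hx => by
    rw [hh]; dsimp only
    rw [hns x hx, zero_div, Real.zero_rpow (by positivity)]
  have hset : ∀ q : ℝ, 0 < q → {x | q ≤ h x} = {x | x ∈ s ∧ g x ≤ c / q} := fun q hq => by
    ext x
    simp only [Set.mem_ofPred_eq]
    by_cases hx : x ∈ s
    · have hgx := (hs x hx).1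
      rw [hhg x hx, le_div_iff₀ hgx, le_div_iff₀ hq, mul_comm]
      simp [hx]
    · simp [hx, hhs x hx, hq]
  have hinf : ∀ η : ℝ, 0 < η → η < 1 → ∃ x ∈ s, g x ≤ c / η := fun η h0 h1 => by
    have : fmax * η ^ β < fmax := by
      have := pow_lt_one₀ h0.le h1 hβ0
      nlinarith
    obtain ⟨_, ⟨x, rfl⟩, hx, -⟩ := hfmax.exists_between this
    have hx' : η ≤ h x := by
      rw [← hpow x] at hx
      have := lt_of_mul_lt_mul_left hx hM.le
      exact (lt_of_pow_lt_pow_left₀ β (hh0 x) this).le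
    have : x ∈ {x | η ≤ h x} := hx'
    rw [hset η h0] at this
    exact ⟨x, this⟩
  have hfin : ∀ q : ℝ, 0 < q → volume {x | q ≤ h x} ≠ ⊤ := fun q hq => by
    have e : {x | q ≤ h x} = {x | fmax * q ^ β ≤ f x} := by
      ext x
      simp only [Set.mem_ofPred_eq]
      rw [← hpow x, mul_le_mul_iff_right₀ hM, pow_le_pow_iff_left₀ hq.le (hh0 x) hβ0]
    rw [e]
    exact (hint.measure_ge_lt_top (by positivity)).ne
  set W : ℝ → ℝ := fun q => (volume {x | q ≤ h x}).toReal with hW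
  have hWU : ∀ q : ℝ, 0 < q → volume {x | q ≤ h x} = ENNReal.ofReal (W q) :=
    fun q hq => (ENNReal.ofReal_toReal (hfin q hq)).symm
  have hmono : ∀ a b : ℝ, 0 < a → a ≤ b → b < 1 →
      W a * (a * (1 - b)) ^ n ≤ W b * (b * (1 - a)) ^ n := fun a b ha hab hb => by
    have hb0 := ha.trans_le hab
    have := levelset_ratio_mono hg ha hab hb hinf (by rw [← hset b hb0]; exact hfin b hb0)
    rwa [← hset a ha, ← hset b hb0] at this
  -- `F` is the layer-cake integrand: its total mass is `1`, and its mass on `(0, q₀]` bounds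
  -- the truncated integral.
  set F : ℝ → ENNReal :=
    fun q => volume {x | q ≤ h x} * ENNReal.ofReal (fmax * (β * q ^ (β - 1))) with hF
  have htot : ∫⁻ q in Set.Ioi 0, F q = 1 := by
    rw [hF, ← lintegral_layercake_pow hhm hh0 fmax hM.le β hβ0]
    simp_rw [hpow]
    rw [← ofReal_integral_eq_lintegral_ofReal hint (ae_of_all _ hf0), hf_prob]; simp
  have hsplit : (∫⁻ q in Set.Ioc 0 q₀, F q) + ∫⁻ q in Set.Ioi q₀, F q = 1 := by
    rw [← htot, ← lintegral_union measurableSet_Ioi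
      (Set.disjoint_left.2 fun x hx hx' => absurd hx.2 (not_le.2 hx')),
      Set.Ioc_union_Ioi_eq_Ioi hq0.le]
  have hX : ENNReal.ofReal (∫ x, min (f x) t) ≤ ∫⁻ q in Set.Ioc 0 q₀, F q := by
    have hmin : ∀ x, min (f x) t = fmax * (min (h x) q₀) ^ β := fun x => by
      rw [← hpow x, ← hqpow]
      rcases le_total (h x) q₀ with h1 | h1
      · rw [min_eq_left h1, min_eq_left]
        have := pow_le_pow_left₀ (hh0 x) h1 β
        gcongr
      · rw [min_eq_right h1, min_eq_right]
        gcongr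
    have hmi : Integrable fun x => min (f x) t := by
      refine hint.mono (hint.aestronglyMeasurable.inf aestronglyMeasurable_const)
        (ae_of_all _ fun x => ?_)
      rw [Real.norm_of_nonneg (le_min (hf0 x) ht.le), Real.norm_of_nonneg (hf0 x)]
      exact min_le_left _ _
    rw [ofReal_integral_eq_lintegral_ofReal hmi (ae_of_all _ fun x => le_min (hf0 x) ht.le)]
    simp_rw [hmin]
    rw [lintegral_layercake_pow (hhm.min aemeasurable_const) (fun x => le_min (hh0 x) hq0.le)
      fmax hM.le β hβ0, ← Set.Ioc_union_Ioi_eq_Ioi hq0.le, lintegral_union measurableSet_Ioi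
      (Set.disjoint_left.2 fun x hx hx' => absurd hx.2 (not_le.2 hx'))]
    have hz : ∫⁻ q in Set.Ioi q₀, volume {x | q ≤ min (h x) q₀} *
        ENNReal.ofReal (fmax * (β * q ^ (β - 1))) = 0 := by
      rw [setLIntegral_congr_fun (g := fun _ => 0) measurableSet_Ioi]
      · simp
      · intro q hq
        have : {x | q ≤ min (h x) q₀} = ∅ := by
          ext x
          simp only [Set.mem_ofPred_eq, Set.mem_empty_iff_false, iff_false, not_le]
          exact (min_le_right _ _).trans_lt hq
        dsimp only
        rw [this, measure_empty, zero_mul]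
    rw [hz, add_zero]
    refine lintegral_mono fun q => ?_
    rw [hF]
    refine mul_le_mul_left (measure_mono fun x hx => ?_) _
    have hx' : q ≤ min (h x) q₀ := hx
    exact (le_min_iff.1 hx').1
  set D : ℝ := ((β - n : ℕ) : ℝ) * β.choose n with hD
  have hDpos : 0 < D := by
    have h1 : 0 < β - n := by omega
    have h2 : 0 < β.choose n := Nat.choose_pos (by omega)
    rw [hD]; positivity
  -- `K` makes `K * D * (1 - q) ^ n * q ^ (β - n - 1)` agree with `F` at `q = q₀`.
  set K : ℝ := W q₀ * q₀ ^ n / (1 - q₀) ^ n * fmax * β / D with hK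
  have h1q : 0 < 1 - q₀ := by linarith
  have hW0 : 0 ≤ W q₀ := ENNReal.toReal_nonneg
  have hK0 : 0 ≤ K := by rw [hK]; positivity
  have hexp : ∀ q : ℝ, q ^ (β - 1) = q ^ n * q ^ (β - n - 1) := fun q => by
    rw [← pow_add]; congr 1; omega
  have hKq : ∀ q : ℝ, K * (D * ((1 - q) ^ n * q ^ (β - n - 1))) * (1 - q₀) ^ n =
      (W q₀ * (q₀ * (1 - q)) ^ n) * (fmax * β * q ^ (β - n - 1)) := fun q => by
    rw [hK, mul_pow]; field_simp
  have hWq : ∀ q : ℝ, W q * (fmax * (β * q ^ (β - 1))) * (1 - q₀) ^ n =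
      (W q * (q * (1 - q₀)) ^ n) * (fmax * β * q ^ (β - n - 1)) := fun q => by
    rw [hexp, mul_pow]; ring
  have hA : ∫⁻ q in Set.Ioc 0 q₀, F q ≤ ENNReal.ofReal (K * binomCDF β n q₀) := by
    have := lintegral_binomCDF β n hβ le_rfl hq0.le hq1.le hK0
    rw [binomCDF_zero β n hβ, sub_zero] at this
    rw [← this, setLIntegral_congr (Ioo_ae_eq_Ioc (a := (0 : ℝ)) (b := q₀)).symm]
    refine setLIntegral_mono' measurableSet_Ioo fun q hq => ?_
    rw [hF]; dsimp only
    rw [hWU q hq.1, ← ENNReal.ofReal_mul ENNReal.toReal_nonneg]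
    apply ENNReal.ofReal_le_ofReal
    refine le_of_mul_le_mul_right ?_ (pow_pos h1q n)
    rw [hWq, ← hD, hKq]
    have := hq.1
    exact mul_le_mul_of_nonneg_right (hmono q q₀ hq.1 hq.2.le hq1) (by positivity)
  have hB : ENNReal.ofReal (K * (1 - binomCDF β n q₀)) ≤ ∫⁻ q in Set.Ioi q₀, F q := by
    have := lintegral_binomCDF β n hβ hq0.le hq1.le le_rfl hK0
    rw [binomCDF_one] at this
    rw [← this]
    -- The open interval avoids `q = 1`, where the level-set comparison is not available.
    refine le_trans ?_ (lintegral_mono_set (show Set.Ioo q₀ 1 ⊆ Set.Ioi q₀ from fun x hx => hx.1))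
    refine setLIntegral_mono' measurableSet_Ioo fun q hq => ?_
    have hqp : 0 < q := hq0.trans hq.1
    rw [hF]; dsimp only
    rw [hWU q hqp, ← ENNReal.ofReal_mul ENNReal.toReal_nonneg]
    apply ENNReal.ofReal_le_ofReal
    refine le_of_mul_le_mul_right ?_ (pow_pos h1q n)
    rw [hWq, ← hD, hKq]
    exact mul_le_mul_of_nonneg_right (hmono q₀ q hq0 hq.1.le hq.2) (by positivity)
  set X := ∫⁻ q in Set.Ioc 0 q₀, F q
  set Y := ∫⁻ q in Set.Ioi q₀, F q
  have hXt : X ≠ ⊤ := ne_top_of_le_ne_top ENNReal.one_ne_top (hsplit ▸ le_self_add)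
  have hYt : Y ≠ ⊤ := ne_top_of_le_ne_top ENNReal.one_ne_top (hsplit ▸ le_add_self)
  have hXY : X.toReal + Y.toReal = 1 := by
    rw [← ENNReal.toReal_add hXt hYt, hsplit]; simp
  have hS1 := binomCDF_lt_one β n hβ hq0 hq1
  have hS0 : 0 ≤ binomCDF β n q₀ := Finset.sum_nonneg fun k _ => by positivity
  have hA' := ENNReal.toReal_le_of_le_ofReal (mul_nonneg hK0 hS0) hA
  have hB' := (ENNReal.ofReal_le_iff_le_toReal hYt).1 hB
  have hX' := (ENNReal.ofReal_le_iff_le_toReal hXt).1 hX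
  refine hX'.trans ?_
  -- `X ≤ K S`, `Y ≥ K (1 - S)` and `X + Y = 1` give `X (1 - S) ≤ S (1 - X)`, hence `X ≤ S`.
  nlinarith [mul_le_mul_of_nonneg_right hA' (sub_nonneg.2 hS1.le),
    mul_le_mul_of_nonneg_right hB' hS0]

/-- For an integer `β ≥ n+1` and any β-concave probability density `f` on `ℝ^n` with finite
sup-norm `f_max` and any threshold `0 < t < f_max`, writing `p = 1 - (t/f_max)^{1/β}`, the
truncated total probability satisfies
`t/f_max ≤ ∫ min{f, t} ≤ ∑_{k=0}^n C(β,k) pᵏ (1-p)^{β-k}`, and the right-hand side (the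
CDF at `n` of a `Binomial(β, p)` random variable) is strictly less than 1. -/
theorem truncated_probability_betaconcave
    (n β : ℕ) (hβ : n + 1 ≤ β)
    (f : (Fin n → ℝ) → ℝ) (fmax t p : ℝ)
    (hf_prob : (∫ x, f x) = 1)
    (hf : IsBetaConcave n (β : ℝ) f)
    (hfmax : IsLUB (Set.range f) fmax)
    (ht : 0 < t) (htf : t < fmax)
    (hp : p = 1 - (t / fmax) ^ ((β : ℝ)⁻¹)) :
    t / fmax ≤ (∫ x, min (f x) t) ∧
      (∫ x, min (f x) t) ≤
        ∑ k ∈ Finset.range (n + 1), (β.choose k : ℝ) * p ^ k * (1 - p) ^ (β - k) ∧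
      ∑ k ∈ Finset.range (n + 1), (β.choose k : ℝ) * p ^ k * (1 - p) ^ (β - k) < 1 := by
  have hM : 0 < fmax := ht.trans htf
  have hβpos : (0 : ℝ) < β := by exact_mod_cast (by omega : 0 < β)
  have hint : Integrable f := by
    by_contra h
    rw [integral_undef h] at hf_prob
    exact zero_ne_one hf_prob
  have hf0 : ∀ x, 0 ≤ f x := by
    obtain ⟨s, g, -, hs, hns⟩ := hf
    intro x
    by_cases hx : x ∈ s
    · rw [(hs x hx).2]
      exact Real.rpow_nonneg (hs x hx).1.le _
    · exact (hns x hx).ge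
  set q₀ : ℝ := (t / fmax) ^ ((β : ℝ)⁻¹) with hq
  have hq0 : 0 < q₀ := Real.rpow_pos_of_pos (div_pos ht hM) _
  have hq1 : q₀ < 1 :=
    Real.rpow_lt_one (div_pos ht hM).le ((div_lt_one hM).2 htf) (inv_pos.2 hβpos)
  have hS : ∑ k ∈ Finset.range (n + 1), (β.choose k : ℝ) * p ^ k * (1 - p) ^ (β - k) =
      binomCDF β n q₀ := by
    rw [hp, binomCDF, sub_sub_cancel]
  rw [hS]
  refine ⟨?_, upper_bound n β hβ f fmax t q₀ hf_prob hint hf hf0 hfmax ht htf hq hq0 hq1,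
    binomCDF_lt_one β n hβ hq0 hq1⟩
  have hmi : Integrable fun x => min (f x) t := by
    refine hint.mono (hint.aestronglyMeasurable.inf aestronglyMeasurable_const)
      (ae_of_all _ fun x => ?_)
    rw [Real.norm_of_nonneg (le_min (hf0 x) ht.le), Real.norm_of_nonneg (hf0 x)]
    exact min_le_left _ _
  calc t / fmax = ∫ x, t / fmax * f x := by rw [integral_const_mul, hf_prob, mul_one]
    _ ≤ ∫ x, min (f x) t := by
      refine integral_mono (hint.const_mul _) hmi fun x => le_min ?_ ?_
      · exact mul_le_of_le_one_left (hf0 x) ((div_lt_one hM).2 htf).le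
      · have : f x ≤ fmax := hfmax.1 ⟨x, rfl⟩
        calc t / fmax * f x ≤ t / fmax * fmax := by gcongr
          _ = t := by field_simp
end

section
/- For any integer k ≥ 0 and any real c > 0, the map n ↦ P(Binomial(n, 1 − e^{−c/n}) ≤ k) is non-increasing in the integer n ≥ 1; that is, for integers 1 ≤ m ≤ n, P(Binomial(n, 1 − e^{−c/n}) ≤ k) ≤ P(Binomial(m, 1 − e^{−c/m}) ≤ k). -/
/-!
Write `F n c` for the CDF at `k` as a function of `c`. If `k ≥ m` the right-hand side is `1`, so let
`k < m`. Differentiating the CDF in `q = e^{-c/n}` telescopes, and in terms of `c` it gives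
`∂F n c / ∂c = - C(n-1,k) (e^{c/n} - 1)^k e^{-c}` (`hasDerivAt_cdf`).
The ratio `(e^{t/m} - 1) / (e^{t/n} - 1)` is nondecreasing in `t` by convexity of `y ↦ y^{n/m}`
(`exp_cross_le`), so the derivative of `D = F n - F m` changes sign at most once, from `-` to `+`.
Since `D 0 = 0` and `D → 0` at infinity, `D ≤ 0`: either `D' ≤ 0` on `(0, c)` and `D c ≤ D 0`,
or `D' ≥ 0` on `(c, ∞)` and `D c ≤ lim D`.
-/

open Filter Topology

/-- `P(Binomial(n, 1 - q) ≤ k)` as a polynomial in the failure probability `q`. -/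
noncomputable def failCdf (n k : ℕ) (q : ℝ) : ℝ :=
  ∑ j ∈ Finset.range (k + 1), (n.choose j : ℝ) * (1 - q) ^ j * q ^ (n - j)

lemma continuous_failCdf (n k : ℕ) : Continuous (failCdf n k) := by
  unfold failCdf
  fun_prop

lemma failCdf_zero {n k : ℕ} (h : k < n) : failCdf n k 0 = 0 := by
  unfold failCdf
  refine Finset.sum_eq_zero fun j hj => ?_
  have := Finset.mem_range.mp hj
  rw [zero_pow (by omega), mul_zero]

lemma failCdf_one {n k : ℕ} : failCdf n k 1 = 1 := by
  unfold failCdf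
  rw [Finset.sum_eq_single 0] <;> simp +contextual

lemma failCdf_eq_one {n k : ℕ} (h : n ≤ k) (q : ℝ) : failCdf n k q = 1 := by
  have hsum : failCdf n k q =
      ∑ j ∈ Finset.range (n + 1), (n.choose j : ℝ) * (1 - q) ^ j * q ^ (n - j) := by
    symm
    refine Finset.sum_subset (Finset.range_mono (by omega)) fun j _ hj => ?_
    rw [Nat.choose_eq_zero_of_lt (by simpa using hj)]
    simp
  have hb := add_pow (1 - q) q n
  rw [sub_add_cancel, one_pow] at hb
  rw [hsum]
  refine Eq.trans ?_ hb.symm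
  exact Finset.sum_congr rfl fun j _ => by ring

lemma failCdf_le_one (n k : ℕ) {q : ℝ} (h0 : 0 ≤ q) (h1 : q ≤ 1) : failCdf n k q ≤ 1 := by
  rw [← failCdf_eq_one (le_max_right k n) q]
  refine Finset.sum_le_sum_of_subset_of_nonneg (Finset.range_mono (by simp)) fun j _ _ => ?_
  have : 0 ≤ 1 - q := by linarith
  positivity

/-- The derivatives of the summands telescope to a single term. -/
lemma hasDerivAt_failCdf (N k : ℕ) (h : k ≤ N) (q : ℝ) :
    HasDerivAt (failCdf (N + 1) k)
      ((N + 1) * (N.choose k : ℝ) * (1 - q) ^ k * q ^ (N - k)) q := by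
  induction k with
  | zero =>
    have := hasDerivAt_pow (N + 1) q
    have h0 : failCdf (N + 1) 0 = fun x => x ^ (N + 1) := by
      funext x
      simp [failCdf]
    rw [h0]
    simpa using this
  | succ k ih =>
    have ih := ih (by omega)
    obtain ⟨r, rfl⟩ : ∃ r, N = k + 1 + r := ⟨N - (k + 1), by omega⟩
    have hrec : failCdf (k + 1 + r + 1) (k + 1) = fun q => failCdf (k + 1 + r + 1) k q +
        ((k + 1 + r + 1).choose (k + 1) : ℝ) * ((1 - q) ^ (k + 1) * q ^ (r + 1)) := by
      funext x
      unfold failCdf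
      rw [Finset.sum_range_succ _ (k + 1)]
      rw [show k + 1 + r + 1 - (k + 1) = r + 1 by omega, mul_assoc]
    have hlin : HasDerivAt (fun q : ℝ => 1 - q) (-1) q := by
      simpa using (hasDerivAt_id q).const_sub 1
    have hterm := ((hlin.pow (k + 1)).mul (hasDerivAt_pow (r + 1) q)).const_mul
      ((k + 1 + r + 1).choose (k + 1) : ℝ)
    rw [hrec]
    refine (ih.add hterm).congr_deriv ?_
    have e1 : ((k + 1 + r : ℕ) + 1 : ℝ) * ((k + 1 + r).choose k : ℝ) =
        ((k + 1 + r + 1).choose (k + 1) : ℝ) * (k + 1) := by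
      exact_mod_cast Nat.add_one_mul_choose_eq (k + 1 + r) k
    have e2 : ((k + 1 + r).choose (k + 1) : ℝ) * ((k + 1 + r : ℕ) + 1) =
        ((k + 1 + r + 1).choose (k + 1) : ℝ) * (r + 1) := by
      have := Nat.choose_mul_succ_eq (k + 1 + r) (k + 1)
      rw [show k + 1 + r + 1 - (k + 1) = r + 1 by omega] at this
      exact_mod_cast this
    rw [show k + 1 + r - k = r + 1 by omega, show k + 1 + r - (k + 1) = r by omega]
    simp only [Nat.add_sub_cancel]
    rw [e1, mul_comm _ ((k + 1 + r).choose (k + 1) : ℝ), e2]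
    push_cast
    simp only [Pi.pow_apply]
    ring

/-- The density of the `c`-parametrised CDF, up to sign. -/
lemma hasDerivAt_cdf (N k : ℕ) (h : k ≤ N) (c : ℝ) :
    HasDerivAt (fun c : ℝ => failCdf (N + 1) k (Real.exp (-c / (N + 1 : ℕ))))
      (-((N.choose k : ℝ) * (Real.exp (c / (N + 1 : ℕ)) - 1) ^ k * Real.exp (-c))) c := by
  have hN : ((N + 1 : ℕ) : ℝ) ≠ 0 := by positivity
  have hq : HasDerivAt (fun c : ℝ => Real.exp (-c / (N + 1 : ℕ)))
      (Real.exp (-c / (N + 1 : ℕ)) * (-1 / (N + 1 : ℕ))) c :=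
    ((hasDerivAt_id c).neg.div_const _).exp
  have hcomp := (hasDerivAt_failCdf N k h (Real.exp (-c / (N + 1 : ℕ)))).comp c hq
  refine hcomp.congr_deriv ?_
  have hexp : Real.exp (-c) = Real.exp (-c / (N + 1 : ℕ)) ^ (N + 1) := by
    rw [← Real.exp_nat_mul]
    congr 1
    field_simp
  have hinv : Real.exp (-c / (N + 1 : ℕ)) * Real.exp (c / (N + 1 : ℕ)) = 1 := by
    rw [← Real.exp_add, neg_div, neg_add_cancel, Real.exp_zero]
  rw [hexp]
  generalize Real.exp (-c / (N + 1 : ℕ)) = q at *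
  generalize Real.exp (c / (N + 1 : ℕ)) = E at *
  obtain ⟨r, rfl⟩ : ∃ r, N = k + r := ⟨N - k, by omega⟩
  have h1 : 1 - q = q * (E - 1) := by rw [mul_sub, hinv, mul_one]
  rw [h1, mul_pow, show k + r - k = r by omega]
  push_cast at hN ⊢
  field_simp
  ring

/-- `(e^{t/a} - 1) / (e^{t/b} - 1)` is nondecreasing in `t > 0` when `a ≤ b`, cross-multiplied.
This is monotonicity of the secant slopes at `1` of the convex function `y ↦ y ^ (b / a)`. -/
lemma exp_cross_le {a b s t : ℝ} (ha : 0 < a) (hab : a ≤ b) (hs : 0 < s) (hst : s ≤ t) :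
    (Real.exp (s / a) - 1) * (Real.exp (t / b) - 1) ≤
      (Real.exp (t / a) - 1) * (Real.exp (s / b) - 1) := by
  have hb : 0 < b := ha.trans_le hab
  have hconv := convexOn_rpow (p := b / a) ((one_le_div ha).2 hab)
  have hpow : ∀ x : ℝ, Real.exp (x / b) ^ (b / a) = Real.exp (x / a) := fun x => by
    rw [← Real.exp_mul]
    congr 1
    field_simp
  have hs1 : 1 < Real.exp (s / b) := Real.one_lt_exp_iff.2 (by positivity)
  have hle : Real.exp (s / b) ≤ Real.exp (t / b) := by gcongr
  have ht1 := hs1.trans_le hle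
  have key := hconv.secant_mono (a := 1) (by simp) (Set.mem_Ici.2 (Real.exp_pos (s / b)).le)
    (Set.mem_Ici.2 (Real.exp_pos (t / b)).le) hs1.ne' ht1.ne' hle
  simp only [hpow, Real.one_rpow] at key
  rwa [div_le_div_iff₀ (by linarith) (by linarith)] at key

/-- The two densities cross at most once. -/
lemma density_cross {a b A B s t : ℝ} (k : ℕ) (ha : 0 < a) (hab : a ≤ b) (hA : 0 ≤ A)
    (hs : 0 < s) (hst : s ≤ t)
    (h : B * (Real.exp (s / b) - 1) ^ k ≤ A * (Real.exp (s / a) - 1) ^ k) :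
    B * (Real.exp (t / b) - 1) ^ k ≤ A * (Real.exp (t / a) - 1) ^ k := by
  have hb : 0 < b := ha.trans_le hab
  have pos : ∀ x y : ℝ, 0 < x → 0 < y → 0 < Real.exp (x / y) - 1 := fun x y hx hy => by
    have : 1 < Real.exp (x / y) := Real.one_lt_exp_iff.2 (by positivity)
    linarith
  have ht := hs.trans_le hst
  have p1 := pos s b hs hb
  have p2 := pos t b ht hb
  have p3 := pos s a hs ha
  have hcross := exp_cross_le ha hab hs hst
  refine le_of_mul_le_mul_right ?_ (pow_pos p1 k)
  calc B * (Real.exp (t / b) - 1) ^ k * (Real.exp (s / b) - 1) ^ k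
      = (B * (Real.exp (s / b) - 1) ^ k) * (Real.exp (t / b) - 1) ^ k := by ring
    _ ≤ (A * (Real.exp (s / a) - 1) ^ k) * (Real.exp (t / b) - 1) ^ k := by gcongr
    _ = A * ((Real.exp (s / a) - 1) * (Real.exp (t / b) - 1)) ^ k := by rw [mul_pow]; ring
    _ ≤ A * ((Real.exp (t / a) - 1) * (Real.exp (s / b) - 1)) ^ k := by gcongr
    _ = A * (Real.exp (t / a) - 1) ^ k * (Real.exp (s / b) - 1) ^ k := by rw [mul_pow]; ring

lemma tendsto_cdf (N k : ℕ) (h : k ≤ N) :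
    Tendsto (fun c : ℝ => failCdf (N + 1) k (Real.exp (-c / (N + 1 : ℕ)))) atTop (𝓝 0) := by
  have hN : (0 : ℝ) < (N + 1 : ℕ) := by positivity
  have hq : Tendsto (fun c : ℝ => Real.exp (-c / (N + 1 : ℕ))) atTop (𝓝 0) :=
    Real.tendsto_exp_atBot.comp (tendsto_neg_atTop_atBot.atBot_div_const hN)
  have := ((continuous_failCdf (N + 1) k).tendsto 0).comp hq
  rwa [failCdf_zero (by omega)] at this

/-- The comparison for `k` smaller than both numbers of trials `M + 1 ≤ N + 1`. -/
lemma cdf_le_of_lt (M N k : ℕ) (hk : k ≤ M) (hMN : M ≤ N) (c : ℝ) (hc : 0 < c) :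
    failCdf (N + 1) k (Real.exp (-c / (N + 1 : ℕ))) ≤
      failCdf (M + 1) k (Real.exp (-c / (M + 1 : ℕ))) := by
  set D : ℝ → ℝ := fun c => failCdf (N + 1) k (Real.exp (-c / (N + 1 : ℕ))) -
    failCdf (M + 1) k (Real.exp (-c / (M + 1 : ℕ))) with hD
  set D' : ℝ → ℝ := fun t => ((M.choose k : ℝ) * (Real.exp (t / (M + 1 : ℕ)) - 1) ^ k -
    (N.choose k : ℝ) * (Real.exp (t / (N + 1 : ℕ)) - 1) ^ k) * Real.exp (-t) with hD'
  have hderiv : ∀ t, HasDerivAt D (D' t) t := fun t =>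
    ((hasDerivAt_cdf N k (hk.trans hMN) t).sub (hasDerivAt_cdf M k hk t)).congr_deriv
      (by simp only [hD']; ring)
  have hcont : Continuous D := continuous_iff_continuousAt.2 fun t => (hderiv t).continuousAt
  suffices D c ≤ 0 from sub_nonpos.1 this
  by_cases hneg : ∀ s ∈ Set.Ioo 0 c, D' s ≤ 0
  · have hanti : AntitoneOn D (Set.Icc 0 c) :=
      antitoneOn_of_deriv_nonpos (convex_Icc 0 c) hcont.continuousOn
        (fun t _ => (hderiv t).differentiableAt.differentiableWithinAt)
        (fun t ht => by rw [(hderiv t).deriv]; exact hneg t (by simpa using ht))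
    have h0 : D 0 = 0 := by simp [hD, failCdf_one]
    rw [← h0]
    exact hanti ⟨le_rfl, hc.le⟩ ⟨hc.le, le_rfl⟩ hc.le
  · push Not at hneg
    obtain ⟨s, ⟨hs0, hsc⟩, hs⟩ := hneg
    have hs' := pos_of_mul_pos_left hs (Real.exp_pos _).le
    have hpos : ∀ t, s ≤ t → 0 ≤ D' t := fun t hst =>
      mul_nonneg (sub_nonneg.2 (density_cross k (by positivity) (by gcongr) (by positivity)
        hs0 hst (sub_pos.1 hs').le)) (Real.exp_pos _).le
    have hmono : MonotoneOn D (Set.Ici c) :=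
      monotoneOn_of_deriv_nonneg (convex_Ici c) hcont.continuousOn
        (fun t _ => (hderiv t).differentiableAt.differentiableWithinAt)
        (fun t ht => by
          rw [(hderiv t).deriv]
          rw [interior_Ici] at ht
          exact hpos t (hsc.trans ht).le)
    have hlim : Tendsto D atTop (𝓝 0) := by
      rw [← sub_zero (0 : ℝ)]
      exact (tendsto_cdf N k (hk.trans hMN)).sub (tendsto_cdf M k hk)
    refine ge_of_tendsto hlim ?_
    filter_upwards [eventually_ge_atTop c] with t ht
    exact hmono Set.self_mem_Ici ht ht

/-- **Monotonicity of the binomial CDF** `n ↦ P(Binomial(n, 1 - e^{-c/n}) ≤ k)`: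
for any integer `k ≥ 0`, real `c > 0`, and integers `1 ≤ m ≤ n`,
`P(Binomial(n, 1 - e^{-c/n}) ≤ k) ≤ P(Binomial(m, 1 - e^{-c/m}) ≤ k)`. -/
theorem binomial_cdf_antitone
    (k : ℕ) (c : ℝ) (hc : 0 < c) (m n : ℕ) (hm : 1 ≤ m) (hmn : m ≤ n) :
    ∑ j ∈ Finset.range (k + 1), (n.choose j : ℝ) *
        (1 - Real.exp (-c / n)) ^ j * Real.exp (-c / n) ^ (n - j) ≤
      ∑ j ∈ Finset.range (k + 1), (m.choose j : ℝ) *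
        (1 - Real.exp (-c / m)) ^ j * Real.exp (-c / m) ^ (m - j) := by
  change failCdf n k (Real.exp (-c / n)) ≤ failCdf m k (Real.exp (-c / m))
  rcases le_or_gt m k with hk | hk
  · rw [failCdf_eq_one hk]
    refine failCdf_le_one n k (Real.exp_pos _).le (Real.exp_le_one_iff.2 ?_)
    exact div_nonpos_of_nonpos_of_nonneg (by linarith) (by positivity)
  · obtain ⟨M, rfl⟩ : ∃ M, m = M + 1 := ⟨m - 1, by omega⟩
    obtain ⟨N, rfl⟩ : ∃ N, n = N + 1 := ⟨n - 1, by omega⟩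
    exact cdf_le_of_lt M N k (by omega) (by omega) c hc
end

section
/- Let n ≥ 1 and let β ≥ 2n be an integer. For any β-concave probability density f on ℝ^n with finite sup-norm f_max, if t > 0 satisfies ∫_{ℝ^n} min{f(x), t} dx = 1/(n+1), then log(f_max/t) ≤ 6n. -/
open MeasureTheory

/-- After multiplication by `e^{0.3 a}` the left side is convex in `a`, so only the endpoints
`a = 0` (equality) and `a = 3` matter. -/
lemma dilation_factor_le (a : ℝ) (h0 : 0 ≤ a) (h3 : a ≤ 3) :
    2 / 3 * Real.exp (-a) + 1 / 3 ≤ Real.exp (-(3 / 10) * a) := by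
  have chord : ∀ c : ℝ, Real.exp (c * a) ≤ (1 - a / 3) + a / 3 * Real.exp (c * 3) := by
    intro c
    have := convexOn_exp.2 (Set.mem_univ (0 : ℝ)) (Set.mem_univ (c * 3))
      (by linarith : (0 : ℝ) ≤ 1 - a / 3) (by linarith : (0 : ℝ) ≤ a / 3) (by ring)
    simp only [smul_eq_mul, mul_zero, zero_add, Real.exp_zero, mul_one] at this
    calc Real.exp (c * a) = Real.exp (a / 3 * (c * 3)) := by ring_nf
      _ ≤ _ := this
  have h1 := chord (-(7 / 10))
  have h2 := chord (3 / 10)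
  have e1 : Real.exp (3 / 10 * 3) ≤ 2.7183 := by
    have := Real.exp_one_lt_d9
    have : Real.exp (3 / 10 * 3) ≤ Real.exp 1 := Real.exp_le_exp.2 (by norm_num)
    linarith
  have e2 : Real.exp (-(7 / 10) * 3) ≤ 0.14 := by
    have h : Real.exp (-(7 / 10) * 3) ≤ Real.exp (-1) * Real.exp (-1) := by
      rw [← Real.exp_add]; exact Real.exp_le_exp.2 (by norm_num)
    have := Real.exp_neg_one_lt_d9
    have := Real.exp_pos (-1)
    nlinarith
  have key : 2 * Real.exp (-(7 / 10) * a) + Real.exp (3 / 10 * a) ≤ 3 := by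
    nlinarith
  have hp := Real.exp_pos (-(3 / 10) * a)
  have m1 : Real.exp (-(3 / 10) * a) * Real.exp (-(7 / 10) * a) = Real.exp (-a) := by
    rw [← Real.exp_add]; ring_nf
  have m2 : Real.exp (-(3 / 10) * a) * Real.exp (3 / 10 * a) = 1 := by
    rw [← Real.exp_add]; ring_nf; exact Real.exp_zero
  nlinarith

lemma six_lt_exp : (6 : ℝ) < Real.exp (9 / 5) := by
  have h : (6 : ℝ) ^ 5 < Real.exp (9 / 5) ^ 5 := by
    have e : Real.exp (9 / 5) ^ 5 = Real.exp 1 ^ 9 := by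
      rw [← Real.exp_nat_mul, ← Real.exp_nat_mul]; norm_num
    rw [e]
    calc (6 : ℝ) ^ 5 < 2.718 ^ 9 := by norm_num
      _ ≤ Real.exp 1 ^ 9 := by
        gcongr
        linarith [Real.exp_one_gt_d9]
  exact lt_of_pow_lt_pow_left₀ 5 (Real.exp_pos _).le h

/-- The integrated form of a dilation inequality with ratio `1/3`. -/
lemma mul_integral_le_of_dilation (n : ℕ) (f h : (Fin n → ℝ) → ℝ) (v : Fin n → ℝ) (K : ℝ)
    (hf : Integrable f) (hh : Integrable h)
    (hle : ∀ x, K * h x ≤ f (v + (1 / 3 : ℝ) • x)) :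
    K * (∫ x, h x) ≤ 3 ^ n * ∫ x, f x := by
  have hF : Integrable (fun y => f (v + y)) := hf.comp_add_left v
  have hFs : Integrable (fun x => f (v + (1 / 3 : ℝ) • x)) :=
    hF.comp_smul (R := (1 / 3 : ℝ)) (by norm_num)
  have e : (∫ x, f (v + (1 / 3 : ℝ) • x)) = 3 ^ n * ∫ x, f x := by
    have := Measure.integral_comp_smul (volume : Measure (Fin n → ℝ))
      (fun y => f (v + y)) (1 / 3 : ℝ)
    rw [this, integral_add_left_eq_self f v]
    simp
  rw [← e, ← integral_const_mul]
  exact integral_mono (hh.const_mul K) hFs hle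

/-- **Lemma (truncation level)**: for `n ≥ 1`, an integer `β ≥ 2n`, and a β-concave
probability density `f` on `ℝ^n` with finite sup-norm `f_max`, if `t > 0` satisfies
`∫ min{f, t} = 1/(n+1)`, then `log(f_max/t) ≤ 6n`. -/
theorem truncation_level_bound
    (n : ℕ) (hn : 1 ≤ n) (β : ℕ) (hβ : 2 * n ≤ β)
    (f : (Fin n → ℝ) → ℝ) (fmax t : ℝ)
    (hf_prob : (∫ x, f x) = 1)
    (hf : IsBetaConcave n (β : ℝ) f)
    (hfmax : IsLUB (Set.range f) fmax)
    (ht : 0 < t)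
    (htrunc : (∫ x, min (f x) t) = 1 / ((n : ℝ) + 1)) :
    Real.log (fmax / t) ≤ 6 * n := by
  obtain ⟨s, g, hg, hs, hns⟩ := hf
  by_contra! hlt
  have hnR : (1 : ℝ) ≤ n := by exact_mod_cast hn
  have hβR : 2 * (n : ℝ) ≤ β := by exact_mod_cast hβ
  have hβ0 : (0 : ℝ) < β := by linarith
  have hf0 : ∀ x, 0 ≤ f x := by
    intro x
    by_cases hx : x ∈ s
    · rw [(hs x hx).2]; exact Real.rpow_nonneg (hs x hx).1.le _
    · rw [hns x hx]
  have hfmax0 : 0 ≤ fmax := (hf0 0).trans (hfmax.1 ⟨0, rfl⟩)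
  have hq : 0 < fmax / t := by
    rcases (div_nonneg hfmax0 ht.le).eq_or_lt with h | h
    · rw [← h, Real.log_zero] at hlt; linarith
    · exact h
  have hbig : t * Real.exp (6 * n) < fmax := by
    have := (Real.lt_log_iff_exp_lt hq).1 hlt
    rw [lt_div_iff₀ ht] at this
    linarith
  obtain ⟨_, ⟨x₀, rfl⟩, hx₀⟩ := (lt_isLUB_iff hfmax).1 hbig
  have hx₀s : x₀ ∈ s := by
    by_contra h
    rw [hns x₀ h] at hx₀
    have := mul_pos ht (Real.exp_pos (6 * n))
    linarith
  -- Integrability follows from the integrals being nonzero.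
  have hfi : Integrable f := by
    by_contra h; rw [integral_undef h] at hf_prob; norm_num at hf_prob
  have hhi : Integrable (fun x => min (f x) t) := by
    by_contra h
    rw [integral_undef h] at htrunc
    have : 0 < 1 / ((n : ℝ) + 1) := by positivity
    linarith
  set T : ℝ := t ^ (-(1 / (β : ℝ))) with hT
  have hT0 : 0 < T := Real.rpow_pos_of_pos ht _
  have hTt : T ^ (-(β : ℝ)) = t := by
    rw [hT, ← Real.rpow_mul ht.le]
    have : -(1 / (β : ℝ)) * -(β : ℝ) = 1 := by field_simp
    rw [this, Real.rpow_one]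
  set a : ℝ := 6 * n / β with ha
  have haβ : a * β = 6 * n := by rw [ha]; field_simp
  have ha0 : 0 ≤ a := by positivity
  have ha3 : a ≤ 3 := by rw [ha, div_le_iff₀ hβ0]; linarith
  have hg0 : g x₀ ≤ T * Real.exp (-a) := by
    have h1 : (T * Real.exp (-a)) ^ (-(β : ℝ)) = t * Real.exp (6 * n) := by
      rw [Real.mul_rpow hT0.le (Real.exp_pos _).le, hTt, ← Real.exp_mul, ← haβ]
      ring_nf
    rw [← h1, (hs x₀ hx₀s).2] at hx₀
    exact ((Real.rpow_lt_rpow_iff_of_neg (by positivity) (hs x₀ hx₀s).1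
      (by linarith : -(β : ℝ) < 0)).1 hx₀).le
  set ρ : ℝ := 2 / 3 * Real.exp (-a) + 1 / 3 with hρ
  have hρ0 : 0 < ρ := by positivity
  have hpt : ∀ x, ρ ^ (-(β : ℝ)) * min (f x) t ≤ f ((2 / 3 : ℝ) • x₀ + (1 / 3 : ℝ) • x) := by
    intro x
    by_cases hx : x ∈ s
    · have hm := hg.1 hx₀s hx (by norm_num : (0 : ℝ) ≤ 2 / 3) (by norm_num : (0 : ℝ) ≤ 1 / 3)
        (by norm_num)
      have hgm := hg.2 hx₀s hx (by norm_num : (0 : ℝ) ≤ 2 / 3) (by norm_num : (0 : ℝ) ≤ 1 / 3)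
        (by norm_num)
      simp only [smul_eq_mul] at hgm
      set G := max (g x) T with hG
      have hG0 : 0 < G := lt_max_of_lt_right hT0
      have hmin : min (f x) t ≤ G ^ (-(β : ℝ)) := by
        rcases max_choice (g x) T with h | h
        · rw [hG, h, ← (hs x hx).2]; exact min_le_left _ _
        · rw [hG, h, hTt]; exact min_le_right _ _
      have hle : g ((2 / 3 : ℝ) • x₀ + (1 / 3 : ℝ) • x) ≤ ρ * G := by
        have h1 : g x ≤ G := le_max_left _ _
        have h2 : T * Real.exp (-a) ≤ G * Real.exp (-a) := by
          gcongr
          exact le_max_right _ _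
        rw [hρ]
        nlinarith
      rw [(hs _ hm).2]
      calc ρ ^ (-(β : ℝ)) * min (f x) t ≤ ρ ^ (-(β : ℝ)) * G ^ (-(β : ℝ)) := by
            gcongr
        _ = (ρ * G) ^ (-(β : ℝ)) := (Real.mul_rpow hρ0.le hG0.le).symm
        _ ≤ _ := Real.rpow_le_rpow_of_nonpos (hs _ hm).1 hle (by linarith)
    · rw [hns x hx, min_eq_left ht.le, mul_zero]
      exact hf0 _
  have hint := mul_integral_le_of_dilation n f _ _ _ hfi hhi hpt
  rw [htrunc, hf_prob, mul_one, mul_one_div, div_le_iff₀ (by positivity)] at hint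
  have hn2 : (n : ℝ) + 1 ≤ 2 ^ n := by exact_mod_cast Nat.lt_two_pow_self (n := n)
  have hup : ρ ^ (-(β : ℝ)) ≤ 6 ^ n := by
    calc ρ ^ (-(β : ℝ)) ≤ 3 ^ n * ((n : ℝ) + 1) := hint
      _ ≤ 3 ^ n * 2 ^ n := by gcongr
      _ = 6 ^ n := by rw [← mul_pow]; norm_num
  have hlow : Real.exp (9 / 5) ^ n ≤ ρ ^ (-(β : ℝ)) := by
    calc Real.exp (9 / 5) ^ n = Real.exp (-(3 / 10) * a) ^ (-(β : ℝ)) := by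
          rw [← Real.exp_mul, ← Real.exp_nat_mul]
          congr 1
          linear_combination (-3 / 10) * haβ
      _ ≤ ρ ^ (-(β : ℝ)) :=
          Real.rpow_le_rpow_of_nonpos hρ0 (dilation_factor_le a ha0 ha3) (by linarith)
  have hstrict : (6 : ℝ) ^ n < Real.exp (9 / 5) ^ n :=
    pow_lt_pow_left₀ six_lt_exp (by norm_num) (by omega)
  linarith
end

section
/- For any quasi-concave probability density f on ℝ^n (n ≥ 1), (sup_{x^{n-1} ∈ ℝ^{n-1}} ∫_ℝ f(x^{n-1}, x_n) dx_n) · (∫_{ℝ^{n-1}} sup_{x_n ∈ ℝ} f(x^{n-1}, x_n) dx^{n-1}) ≤ n · sup_{x ∈ ℝ^n} f(x). -/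
open MeasureTheory ENNReal
open Set
open scoped Pointwise

/-!
Write `K_t = {f > t}`, a convex set, and fix `y₀`. By the layer-cake formula, `∫ f(y₀, z) dz` is the
integral over `t` of the length `ℓ(t)` of the section of `K_t` above `y₀`, `∫ sup_z f(y, z) dy` is
the integral of the volume `p(t)` of the projection of `K_t` to `ℝ^m`, and `1 = ∫ f` is the integral
of `|K_t|`. Both `ℓ` and `p` are antitone and vanish for `t > M = sup f`, so Chebyshev's integral
inequality (`lintegral_mul_lintegral_le_of_antitone`) gives `(∫ ℓ) (∫ p) ≤ M ∫ ℓ p`.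

It remains to see that `ℓ p ≤ (m + 1) |K|` for a convex set `K ⊆ ℝ^m × ℝ`
(`volume_section_mul_volume_proj_le`). Contracting the projection `P` of `K` towards `y₀` by a
factor `s ∈ [0, 1]` yields points above which, by convexity, the section of `K` has length at least
`(1 - s) ℓ`. Hence `|{y : |K_y| ≥ (1 - s) ℓ}| ≥ s ^ m |P|`, and the layer-cake formula for
`|K| = ∫ |K_y| dy` gives `|K| ≥ ℓ |P| ∫₀¹ s ^ m ds = ℓ |P| / (m + 1)`.
-/

/-- The two-term rearrangement inequality. The ordered-semiring version in Mathlib requires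
cancellation of addition, which fails in `ℝ≥0∞`. -/
theorem mul_add_mul_le_of_le {a b c d : ℝ≥0∞} (hab : a ≤ b) (hcd : c ≤ d) :
    a * d + b * c ≤ a * c + b * d := by
  obtain ⟨e, rfl⟩ := exists_add_of_le hab
  obtain ⟨g, rfl⟩ := exists_add_of_le hcd
  calc a * (c + g) + (a + e) * c ≤ a * (c + g) + (a + e) * c + e * g := le_self_add
    _ = a * c + (a + e) * (c + g) := by ring

/-- **Chebyshev's integral inequality** for two antitone functions: integrate the rearrangement
inequality `φ s ψ t + φ t ψ s ≤ φ s ψ s + φ t ψ t` in both variables. -/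
theorem lintegral_mul_lintegral_le_of_antitone (ν : Measure ℝ) {φ ψ : ℝ → ℝ≥0∞}
    (hφ : Antitone φ) (hψ : Antitone ψ) :
    (∫⁻ t, φ t ∂ν) * (∫⁻ t, ψ t ∂ν) ≤ ν univ * ∫⁻ t, φ t * ψ t ∂ν := by
  have mφ := hφ.measurable
  have mψ := hψ.measurable
  have mφψ : Measurable fun t => φ t * ψ t := mφ.mul mψ
  have key : ∀ s t, φ s * ψ t + ψ s * φ t ≤ φ s * ψ s + φ t * ψ t := by
    intro s t
    rcases le_total s t with h | h
    · have := mul_add_mul_le_of_le (hφ h) (hψ h)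
      calc _ = φ t * ψ s + φ s * ψ t := by ring
        _ ≤ _ := this
        _ = _ := by ring
    · have := mul_add_mul_le_of_le (hφ h) (hψ h)
      calc _ = φ s * ψ t + φ t * ψ s := by ring
        _ ≤ _ := this
  have h2 : (∫⁻ s, ∫⁻ t, (φ s * ψ t + ψ s * φ t) ∂ν ∂ν) ≤
      ∫⁻ s, ∫⁻ t, (φ s * ψ s + φ t * ψ t) ∂ν ∂ν :=
    lintegral_mono fun s => lintegral_mono fun t => key s t
  have e1 : (∫⁻ s, ∫⁻ t, (φ s * ψ t + ψ s * φ t) ∂ν ∂ν) =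
      2 * ((∫⁻ t, φ t ∂ν) * (∫⁻ t, ψ t ∂ν)) := by
    simp_rw [lintegral_add_left (mψ.const_mul _), lintegral_const_mul _ mψ,
      lintegral_const_mul _ mφ]
    rw [lintegral_add_left (mφ.mul_const _), lintegral_mul_const _ mφ, lintegral_mul_const _ mψ]
    ring
  have e2 : (∫⁻ s, ∫⁻ t, (φ s * ψ s + φ t * ψ t) ∂ν ∂ν) =
      2 * (ν univ * ∫⁻ t, φ t * ψ t ∂ν) := by
    simp_rw [lintegral_add_left measurable_const, lintegral_const]
    rw [lintegral_add_left (mφψ.mul_const _), lintegral_mul_const _ mφψ, lintegral_const]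
    ring
  rw [e1, e2] at h2
  exact (ENNReal.mul_le_mul_iff_right (by norm_num) (by norm_num)).1 h2

theorem lintegral_one_sub_div_pow (m : ℕ) {a : ℝ} (ha : 0 < a) :
    ∫⁻ t in Ioc 0 a, ENNReal.ofReal ((1 - t / a) ^ m) = ENNReal.ofReal (a / (m + 1)) := by
  rw [← ofReal_integral_eq_lintegral_ofReal]
  · rw [← intervalIntegral.integral_of_le ha.le,
      intervalIntegral.integral_comp_sub_div (fun x => x ^ m) ha.ne', integral_pow]
    congr 1
    rw [div_self ha.ne']
    simp [div_eq_mul_inv]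
  · exact (Continuous.integrableOn_Ioc (by fun_prop))
  · filter_upwards [ae_restrict_mem measurableSet_Ioc] with t ht
    have : t / a ≤ 1 := (div_le_one ha).2 ht.2
    exact pow_nonneg (by linarith) _

/-- For `w` in the projection of `K`, the section above the point `(1 - s) y₀ + s w` contains a
translate of the section above `y₀` scaled by `1 - s`. -/
theorem volume_section_ge {m : ℕ} {K : Set ((Fin m → ℝ) × ℝ)} (hK : Convex ℝ K)
    {y₀ w : Fin m → ℝ} {z : ℝ} (hw : (w, z) ∈ K) {s : ℝ} (hs0 : 0 ≤ s) (hs1 : s ≤ 1) :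
    ENNReal.ofReal (1 - s) * volume (Prod.mk y₀ ⁻¹' K) ≤
      volume (Prod.mk (AffineMap.homothety y₀ s w) ⁻¹' K) := by
  have h1 : (fun u => s * z + u) '' ((1 - s) • (Prod.mk y₀ ⁻¹' K)) ⊆
      Prod.mk (AffineMap.homothety y₀ s w) ⁻¹' K := by
    rintro _ ⟨_, ⟨v, hv, rfl⟩, rfl⟩
    have := hK hw hv hs0 (sub_nonneg.2 hs1) (by ring)
    simp only [mem_preimage]
    convert! this using 1
    ext i
    · simp [AffineMap.homothety_apply]; ring
    · simp
  calc _ = volume ((fun u => s * z + u) '' ((1 - s) • (Prod.mk y₀ ⁻¹' K))) := by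
        rw [image_add_left, measure_preimage_add, Measure.addHaar_smul]
        simp [abs_of_nonneg (sub_nonneg.2 hs1)]
    _ ≤ _ := measure_mono h1

/-- The section-projection inequality with the section length replaced by a positive real lower
bound `a`, so that a section of infinite length is allowed. -/
theorem volume_section_mul_volume_proj_le_aux {m : ℕ} {K : Set ((Fin m → ℝ) × ℝ)}
    (hK : Convex ℝ K) (y₀ : Fin m → ℝ) {a : ℝ} (ha : 0 < a)
    (hle : ENNReal.ofReal a ≤ volume (Prod.mk y₀ ⁻¹' K)) :
    ENNReal.ofReal a * volume (Prod.fst '' K) ≤ ((m : ℝ≥0∞) + 1) * volume K := by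
  have hnull : NullMeasurableSet K ((volume : Measure (Fin m → ℝ)).prod (volume : Measure ℝ)) :=
    hK.nullMeasurableSet (μ := volume.prod volume)
  set g : (Fin m → ℝ) → ℝ≥0∞ := fun y => volume (Prod.mk y ⁻¹' K) with hg
  have hmeasK : AEMeasurable (K.indicator (fun _ => (1 : ℝ≥0∞)))
      ((volume : Measure (Fin m → ℝ)).prod (volume : Measure ℝ)) :=
    aemeasurable_const.indicator₀ hnull
  have hsec : ∀ y, ∫⁻ z, K.indicator (fun _ => (1 : ℝ≥0∞)) (y, z) = g y := by
    intro y
    have : MeasurableSet (Prod.mk y ⁻¹' K) := by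
      refine Set.OrdConnected.measurableSet (Convex.ordConnected ?_)
      intro u hu v hv α β hα hβ hαβ
      have := hK hu hv hα hβ hαβ
      simpa [← add_smul, hαβ] using this
    exact lintegral_indicator_one this
  have hgm : AEMeasurable g volume := by
    have := hmeasK.lintegral_prod_right'
    simpa only [hsec] using this
  have hvol : volume K = ∫⁻ y, g y := by
    rw [Measure.volume_eq_prod, ← lintegral_indicator_one₀ hnull]
    have := lintegral_prod _ hmeasK
    simp only [hsec] at this
    exact this
  -- The truncation at `a` makes the section length real-valued.
  set h : (Fin m → ℝ) → ℝ := fun y => (min (g y) (ENNReal.ofReal a)).toReal with hh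
  have hmin : ∀ y, min (g y) (ENNReal.ofReal a) ≠ ⊤ := fun y =>
    ne_top_of_le_ne_top ENNReal.ofReal_ne_top (min_le_right _ _)
  have hlayer : ∫⁻ t in Ioi 0, volume {y | t ≤ h y} ≤ volume K := by
    rw [← lintegral_eq_lintegral_meas_le volume (Filter.Eventually.of_forall fun y => toReal_nonneg)
      (hgm.min aemeasurable_const).ennreal_toReal, hvol]
    refine lintegral_mono fun y => ?_
    rw [ENNReal.ofReal_toReal (hmin y)]
    exact min_le_left _ _
  have hlevel : ∀ t ∈ Ioc 0 a, ENNReal.ofReal ((1 - t / a) ^ m) * volume (Prod.fst '' K) ≤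
      volume {y | t ≤ h y} := by
    intro t ht
    have h1 : t / a ≤ 1 := (div_le_one ha).2 ht.2
    have h0 : 0 ≤ t / a := div_nonneg ht.1.le ha.le
    calc _ = volume (AffineMap.homothety y₀ (1 - t / a) '' (Prod.fst '' K)) := by
          rw [Measure.addHaar_image_homothety, abs_of_nonneg (pow_nonneg (by linarith) _)]
          simp
      _ ≤ _ := by
          refine measure_mono ?_
          rintro _ ⟨_, ⟨⟨w, z⟩, hw, rfl⟩, rfl⟩
          have h2 := volume_section_ge hK (y₀ := y₀) hw (s := 1 - t / a) (by linarith) (by linarith)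
          rw [mem_ofPred_eq, hh, ← ENNReal.ofReal_le_iff_le_toReal (hmin _)]
          refine le_min (le_trans ?_ h2) (ENNReal.ofReal_le_ofReal ht.2)
          calc ENNReal.ofReal t = ENNReal.ofReal (1 - (1 - t / a)) * ENNReal.ofReal a := by
                rw [← ENNReal.ofReal_mul (by linarith)]; congr 1; field_simp; ring
            _ ≤ _ := by gcongr
  have hmain : ENNReal.ofReal (a / (m + 1)) * volume (Prod.fst '' K) ≤ volume K := by
    rw [← lintegral_one_sub_div_pow m ha, ← lintegral_mul_const _ (by fun_prop)]
    calc _ ≤ ∫⁻ t in Ioc 0 a, volume {y | t ≤ h y} := setLIntegral_mono' measurableSet_Ioc hlevel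
      _ ≤ ∫⁻ t in Ioi 0, volume {y | t ≤ h y} := lintegral_mono_set Ioc_subset_Ioi_self
      _ ≤ _ := hlayer
  calc _ = ((m : ℝ≥0∞) + 1) * (ENNReal.ofReal (a / (m + 1)) * volume (Prod.fst '' K)) := by
        rw [← mul_assoc]
        congr 1
        have : ((m : ℝ≥0∞) + 1) = ENNReal.ofReal (m + 1) := by
          rw [ENNReal.ofReal_add (by positivity) (by positivity)]; simp
        rw [this, ← ENNReal.ofReal_mul (by positivity)]
        congr 1
        field_simp
    _ ≤ _ := by gcongr

/-- The volume of a convex set in dimension `m + 1` is at least `1 / (m + 1)` times the product of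
the length of any vertical section and the volume of the projection. -/
theorem volume_section_mul_volume_proj_le {m : ℕ} {K : Set ((Fin m → ℝ) × ℝ)}
    (hK : Convex ℝ K) (y₀ : Fin m → ℝ) :
    volume (Prod.mk y₀ ⁻¹' K) * volume (Prod.fst '' K) ≤ ((m : ℝ≥0∞) + 1) * volume K := by
  refine ENNReal.mul_le_of_forall_lt fun b hb c hc => ?_
  rcases eq_or_ne b 0 with rfl | hb0
  · simp
  have hbt : b ≠ ⊤ := hb.ne_top
  have := volume_section_mul_volume_proj_le_aux hK y₀ (a := b.toReal)
    (ENNReal.toReal_pos hb0 hbt) (by rw [ENNReal.ofReal_toReal hbt]; exact hb.le)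
  rw [ENNReal.ofReal_toReal hbt] at this
  exact le_trans (by gcongr) this

theorem convex_superlevel_lt {E : Type*} [AddCommGroup E] [Module ℝ E] {f : E → ℝ}
    (hf : ∀ t : ℝ, Convex ℝ {x | t ≤ f x}) (t : ℝ) : Convex ℝ {x | t < f x} := by
  intro x hx y hy a b ha hb hab
  have hmem : min (f x) (f y) ≤ f (a • x + b • y) :=
    hf _ (min_le_left (f x) (f y)) (min_le_right (f x) (f y)) ha hb hab
  exact (lt_min hx hy).trans_le hmem

/-- Convex sets are null-measurable, since their frontier is null; this makes quasi-concave
functions a.e.-measurable. -/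
theorem aemeasurable_of_convex_superlevel {E : Type*} [NormedAddCommGroup E] [NormedSpace ℝ E]
    [FiniteDimensional ℝ E] [MeasurableSpace E] [BorelSpace E] (μ : Measure E)
    [μ.IsAddHaarMeasure] {f : E → ℝ} (hf : ∀ t : ℝ, Convex ℝ {x | t < f x}) :
    AEMeasurable f μ := by
  refine NullMeasurable.aemeasurable ?_
  have : @Measurable (NullMeasurableSpace E μ) ℝ _ _ f :=
    measurable_of_Ioi fun t => (hf t).nullMeasurableSet (μ := μ)
  exact fun s hs => this hs

/-- **Lemma (sup-slice inequality for quasi-concave densities)**: for any quasi-concave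
probability density `f` on `ℝ^n` (here `n = m + 1 ≥ 1`, with `ℝ^n` split as
`ℝ^{n-1} × ℝ`),
`(sup_{x^{n-1}} ∫ f(x^{n-1}, x_n) dx_n) · (∫ sup_{x_n} f(x^{n-1}, x_n) dx^{n-1})
  ≤ n · sup f`.
The suprema and integrals are taken in `[0, ∞]` so that all quantities are well defined. -/
theorem quasiconcave_sup_slice_inequality
    (m : ℕ) (f : ((Fin m → ℝ) × ℝ) → ℝ)
    (hf_nonneg : ∀ x, 0 ≤ f x)
    (hf_prob : (∫ x, f x) = 1)
    (hf_qc : ∀ t : ℝ, Convex ℝ {x : (Fin m → ℝ) × ℝ | t ≤ f x}) :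
    (⨆ y : Fin m → ℝ, ∫⁻ z : ℝ, ENNReal.ofReal (f (y, z))) *
        (∫⁻ y : Fin m → ℝ, ⨆ z : ℝ, ENNReal.ofReal (f (y, z))) ≤
      ((m : ℝ≥0∞) + 1) * ⨆ x : (Fin m → ℝ) × ℝ, ENNReal.ofReal (f x) := by
  set M : ℝ≥0∞ := ⨆ x : (Fin m → ℝ) × ℝ, ENNReal.ofReal (f x) with hM
  rcases eq_or_ne M ⊤ with hMt | hMt
  · rw [hMt, ENNReal.mul_top (by simp)]; exact le_top
  rw [ENNReal.iSup_mul]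
  refine iSup_le fun y₀ => ?_
  have hconv := convex_superlevel_lt hf_qc
  -- `G` is the partial supremum of `f`; it is finite because `M` is.
  set G : (Fin m → ℝ) → ℝ := fun y => (⨆ z : ℝ, ENNReal.ofReal (f (y, z))).toReal with hG
  have hGt : ∀ y, (⨆ z : ℝ, ENNReal.ofReal (f (y, z))) ≠ ⊤ := fun y =>
    ne_top_of_le_ne_top hMt (iSup_le fun z => le_iSup (fun x => ENNReal.ofReal (f x)) (y, z))
  have hGofReal : ∀ y, ENNReal.ofReal (G y) = ⨆ z : ℝ, ENNReal.ofReal (f (y, z)) := fun y =>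
    ENNReal.ofReal_toReal (hGt y)
  have hGlevel : ∀ t : ℝ, 0 ≤ t → {y | t < G y} = Prod.fst '' {x | t < f x} := by
    intro t ht
    ext y
    have : t < G y ↔ ∃ z, t < f (y, z) := by
      rw [hG, ← ENNReal.ofReal_lt_iff_lt_toReal ht (hGt y), lt_iSup_iff]
      refine exists_congr fun z => ?_
      rw [ENNReal.ofReal_lt_ofReal_iff_of_nonneg ht]
    simp [this]
  have hGconv : ∀ t : ℝ, Convex ℝ {y | t < G y} := by
    intro t
    rcases lt_or_ge t 0 with ht | ht
    · have : {y | t < G y} = univ := eq_univ_of_forall fun y => ht.trans_le toReal_nonneg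
      rw [this]; exact convex_univ
    · rw [hGlevel t ht]
      exact (hconv t).linear_image (LinearMap.fst ℝ _ _)
  have hslice : ∀ t : ℝ, Convex ℝ {z | t < f (y₀, z)} := by
    intro t u hu v hv α β hα hβ hαβ
    have := hconv t hu hv hα hβ hαβ
    simpa [← add_smul, hαβ] using this
  have hfi : Integrable f := by
    by_contra hcon
    rw [integral_undef hcon] at hf_prob
    exact zero_ne_one hf_prob
  have I1 : ∫⁻ z : ℝ, ENNReal.ofReal (f (y₀, z)) = ∫⁻ t in Ioi 0, volume {z | t < f (y₀, z)} :=
    lintegral_eq_lintegral_meas_lt volume (Filter.Eventually.of_forall fun z => hf_nonneg _)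
      (aemeasurable_of_convex_superlevel volume hslice)
  have I2 : ∫⁻ y, (⨆ z : ℝ, ENNReal.ofReal (f (y, z))) = ∫⁻ t in Ioi 0, volume {y | t < G y} := by
    simp_rw [← hGofReal]
    exact lintegral_eq_lintegral_meas_lt volume
      (Filter.Eventually.of_forall fun y => toReal_nonneg)
      (aemeasurable_of_convex_superlevel volume hGconv)
  have I3 : ∫⁻ t in Ioi 0, volume {x | t < f x} = 1 := by
    rw [← lintegral_eq_lintegral_meas_lt volume (Filter.Eventually.of_forall hf_nonneg)
      hfi.aemeasurable, ← ofReal_integral_eq_lintegral_ofReal hfi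
      (Filter.Eventually.of_forall hf_nonneg), hf_prob, ENNReal.ofReal_one]
  have hfM : ∀ x, f x ≤ M.toReal := fun x =>
    (ENNReal.ofReal_le_iff_le_toReal hMt).1 (le_iSup (fun x => ENNReal.ofReal (f x)) x)
  -- No level above `M` contributes.
  have hcut : ∀ φ : ℝ → ℝ≥0∞, (∀ t, M.toReal < t → φ t = 0) →
      ∫⁻ t in Ioi 0, φ t = ∫⁻ t in Ioc 0 M.toReal, φ t := by
    intro φ hφ
    rw [← lintegral_indicator measurableSet_Ioi, ← lintegral_indicator measurableSet_Ioc]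
    congr 1 with t
    by_cases h0 : 0 < t <;> by_cases h1 : t ≤ M.toReal <;> simp [indicator, h0, h1]
    exact hφ t (not_le.1 h1)
  have J1 := hcut (fun t => volume {z | t < f (y₀, z)}) fun t ht => by
    have : {z | t < f (y₀, z)} = ∅ := eq_empty_of_forall_notMem fun z hz =>
      absurd (hfM (y₀, z)) (not_le.2 (ht.trans hz))
    simp [this]
  have J2 := hcut (fun t => volume {y | t < G y}) fun t ht => by
    have : {y | t < G y} = ∅ := by
      rw [hGlevel t (toReal_nonneg.trans ht.le)]
      have : {x | t < f x} = ∅ := eq_empty_of_forall_notMem fun x hx =>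
        absurd (hfM x) (not_le.2 (ht.trans hx))
      simp [this]
    simp [this]
  rw [I1, I2, J1, J2]
  calc _ ≤ (volume.restrict (Ioc 0 M.toReal)) univ *
        ∫⁻ t in Ioc 0 M.toReal, volume {z | t < f (y₀, z)} * volume {y | t < G y} :=
        lintegral_mul_lintegral_le_of_antitone _
          (fun s t hst => measure_mono fun z hz => lt_of_le_of_lt hst hz)
          (fun s t hst => measure_mono fun z hz => lt_of_le_of_lt hst hz)
    _ ≤ M * ∫⁻ t in Ioc 0 M.toReal, ((m : ℝ≥0∞) + 1) * volume {x | t < f x} := by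
        gcongr ?_ * ?_
        · simp [ENNReal.ofReal_toReal hMt]
        · refine setLIntegral_mono' measurableSet_Ioc fun t ht => ?_
          rw [hGlevel t ht.1.le]
          exact volume_section_mul_volume_proj_le (hconv t) y₀
    _ = M * (((m : ℝ≥0∞) + 1) * ∫⁻ t in Ioc 0 M.toReal, volume {x | t < f x}) := by
        rw [lintegral_const_mul']
        simp
    _ ≤ M * (((m : ℝ≥0∞) + 1) * 1) := by
        gcongr
        rw [← I3]
        exact lintegral_mono_set Ioc_subset_Ioi_self
    _ = _ := by ring
end

section
/- Let n ≥ 1 and let β ≥ 2n be an integer. Let f be a β-concave probability density on ℝ^n with finite sup-norm f_max and finite differential entropy h(f), let t > 0 satisfy ∫_{ℝ^n} min{f(x), t} dx = 1/(n+1), and let h̃ denote the differential entropy of the truncated density x ↦ (n+1)·min{f(x), t}. Then h̃ − h(f) ≤ log(f_max/t) + 2n. -/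
/-!
Put `m = min f t`, `q = m / t` and let `M` be the maximum of `f`. Since `m` integrates to
`1 / (n + 1)`, the truncated entropy is `-log ((n + 1) t) + (n + 1) t ∫ (-q log q)`, and
`-h(f) = ∫ f log f ≤ log M`. As `log (n + 1) ≥ 0`, it suffices to show `∫ (-q log q) ≤ 2 n ∫ q`.
This is an entropy bound for the β-concave function `q`, which has maximum `1`.

Write `q = Y ^ β`, so that `1 / Y` is convex with minimum `1`, attained at some `x₀`. Shrinking
towards `x₀` maps superlevel sets of `Y` into higher ones, and comparing volumes shows that
`|{Y ≥ y}| / (1/y - 1) ^ n` is nondecreasing in `y` (`betaConcave_shrink`). By the layer cake formula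
the claim is the positivity of the integral of `|{Y ≥ y}|` against
`β y ^ (β - 1) (2 n + 1 + β log y)`, a weight with a single sign change. This allows replacing
`|{Y ≥ y}|` by a multiple of the extremal profile `(1/y - 1) ^ n` (`entropy_le_of_shrink`), for which
the integral is an explicit combination of beta integrals and their logarithmic analogues
(`integral_beta`, `integral_beta_log`). It is nonnegative because
`β (1/(β - n) + ⋯ + 1/β) ≤ 2 n + 1` whenever `β ≥ 2 n` (`beta_log_le`).
-/

open MeasureTheory

/-! ### Beta integrals with a logarithm -/

lemma intervalIntegrable_beta_log (n a : ℕ) (c d : ℝ) :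
    IntervalIntegrable (fun y : ℝ => (1 - y) ^ n * y ^ a * Real.log y) volume c d := by
  apply IntervalIntegrable.continuousOn_mul
  · exact intervalIntegral.intervalIntegrable_log'
  · fun_prop

lemma integral_pow_mul_log (a : ℕ) {Y : ℝ} (hY : 0 ≤ Y) :
    ∫ y in (0 : ℝ)..Y, y ^ a * Real.log y =
      Y ^ (a + 1) * Real.log Y / (a + 1) - Y ^ (a + 1) / ((a : ℝ) + 1) ^ 2 := by
  have hcont : Continuous fun y : ℝ =>
      y ^ (a + 1) * Real.log y / (a + 1) - y ^ (a + 1) / ((a : ℝ) + 1) ^ 2 := by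
    have : (fun y : ℝ =>
      y ^ (a + 1) * Real.log y / (a + 1) - y ^ (a + 1) / ((a : ℝ) + 1) ^ 2) =
      fun y : ℝ => y ^ a * (y * Real.log y) / (a + 1) - y ^ (a + 1) / ((a : ℝ) + 1) ^ 2 := by
      ext y; ring
    rw [this]
    have := Real.continuous_mul_log
    fun_prop
  have hI : IntervalIntegrable (fun y : ℝ => y ^ a * Real.log y) volume 0 Y := by
    simpa using intervalIntegrable_beta_log 0 a 0 Y
  rw [intervalIntegral.integral_eq_sub_of_hasDerivAt_of_le hY hcont.continuousOn _ hI]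
  · simp
  · intro y hy
    have hy0 : y ≠ 0 := hy.1.ne'
    have h1 := ((hasDerivAt_pow (a + 1) y).mul (Real.hasDerivAt_log hy0)).div_const ((a : ℝ) + 1)
    have h2 := (hasDerivAt_pow (a + 1) y).div_const (((a : ℝ) + 1) ^ 2)
    refine (h1.sub h2).congr_deriv ?_
    have : (a : ℝ) + 1 ≠ 0 := by positivity
    push_cast
    field_simp
    ring

/-- Euler's beta integral at integer arguments, by `(1 - y) ^ (n + 1) = (1 - y) ^ n (1 - y)`. -/
lemma integral_beta (n : ℕ) : ∀ a : ℕ, ∫ y in (0 : ℝ)..1, (1 - y) ^ n * y ^ a =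
    (n.factorial * a.factorial : ℝ) / (n + a + 1).factorial := by
  induction n with
  | zero =>
    intro a
    simp only [pow_zero, one_mul, integral_pow, Nat.factorial, zero_add]
    have := Nat.factorial_ne_zero a
    push_cast
    field_simp
    simp
  | succ n ih =>
    intro a
    have : ∀ y : ℝ, (1 - y) ^ (n + 1) * y ^ a = (1 - y) ^ n * y ^ a - (1 - y) ^ n * y ^ (a + 1) := by
      intro y; ring
    simp_rw [this]
    rw [intervalIntegral.integral_sub (Continuous.intervalIntegrable (by fun_prop) _ _)
      (Continuous.intervalIntegrable (by fun_prop) _ _), ih, ih,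
      show n + (a + 1) + 1 = (n + a + 1) + 1 by ring, show n + 1 + a + 1 = (n + a + 1) + 1 by ring]
    simp only [Nat.factorial_succ (n + a + 1), Nat.factorial_succ n, Nat.factorial_succ a]
    have := Nat.factorial_ne_zero (n + a + 1)
    push_cast
    field_simp
    ring

lemma integral_beta_log (n : ℕ) : ∀ a : ℕ,
    ∫ y in (0 : ℝ)..1, (1 - y) ^ n * y ^ a * Real.log y =
    -((n.factorial * a.factorial : ℝ) / (n + a + 1).factorial *
      ∑ i ∈ Finset.range (n + 1), 1 / ((a : ℝ) + 1 + i)) := by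
  induction n with
  | zero =>
    intro a
    simp only [pow_zero, one_mul, integral_pow_mul_log a zero_le_one, Nat.factorial, zero_add]
    have := Nat.factorial_ne_zero a
    push_cast
    simp
    field_simp
  | succ n ih =>
    intro a
    have : ∀ y : ℝ, (1 - y) ^ (n + 1) * y ^ a * Real.log y =
      (1 - y) ^ n * y ^ a * Real.log y - (1 - y) ^ n * y ^ (a + 1) * Real.log y := by
      intro y; ring
    simp_rw [this]
    rw [intervalIntegral.integral_sub (intervalIntegrable_beta_log _ _ _ _)
      (intervalIntegrable_beta_log _ _ _ _), ih, ih,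
      show n + (a + 1) + 1 = (n + a + 1) + 1 by ring, show n + 1 + a + 1 = (n + a + 1) + 1 by ring]
    -- both shorter harmonic sums are the full one minus an end term
    have h1 : ∑ i ∈ Finset.range (n + 1), 1 / ((a : ℝ) + 1 + i) =
        ∑ i ∈ Finset.range (n + 1 + 1), 1 / ((a : ℝ) + 1 + i) - 1 / ((a : ℝ) + 1 + (n + 1)) := by
      rw [Finset.sum_range_succ _ (n + 1)]; push_cast; ring
    have h2 : ∑ i ∈ Finset.range (n + 1), 1 / (((a + 1 : ℕ) : ℝ) + 1 + i) =
        ∑ i ∈ Finset.range (n + 1 + 1), 1 / ((a : ℝ) + 1 + i) - 1 / ((a : ℝ) + 1) := by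
      rw [Finset.sum_range_succ' _ (n + 1)]
      push_cast
      have : ∀ i : ℕ, (a : ℝ) + 1 + 1 + i = a + 1 + (i + 1) := fun i => by ring
      simp_rw [this]; simp
    rw [h1, h2]
    generalize ∑ i ∈ Finset.range (n + 1 + 1), 1 / ((a : ℝ) + 1 + i) = T
    simp only [Nat.factorial_succ (n + a + 1), Nat.factorial_succ n, Nat.factorial_succ a]
    have := Nat.factorial_ne_zero (n + a + 1)
    push_cast
    have : (a : ℝ) + 1 + (n + 1) ≠ 0 := by positivity
    have : (n : ℝ) + a + 1 + 1 ≠ 0 := by positivity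
    field_simp
    ring

/-- The bound for the extremal profile: the ratio of the two beta integrals is the harmonic sum
`∑ 1/j` over `β - n ≤ j ≤ β`. Its last term is `1/β` and the other `n` are at most `2/β`, as
`β ≥ 2 n`. Equality holds for `n = 1`, `β = 2`. -/
lemma beta_log_le (n a β : ℕ) (hβ : 2 * n ≤ β) (ha : a + n + 1 = β) :
    β * ∫ y in (0 : ℝ)..1, -((1 - y) ^ n * y ^ a * Real.log y) ≤
      (2 * n + 1) * ∫ y in (0 : ℝ)..1, (1 - y) ^ n * y ^ a := by
  rw [intervalIntegral.integral_neg, integral_beta_log, integral_beta, neg_neg]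
  set B := (n.factorial * a.factorial : ℝ) / (n + a + 1).factorial
  have hB : 0 ≤ B := by positivity
  have hS : (β : ℝ) * ∑ i ∈ Finset.range (n + 1), 1 / ((a : ℝ) + 1 + i) ≤ 2 * n + 1 := by
    have hb : (a : ℝ) + n + 1 = β := by exact_mod_cast ha
    have hb2 : 2 * (n : ℝ) ≤ β := by exact_mod_cast hβ
    rw [Finset.sum_range_succ, mul_add, Finset.mul_sum]
    have hlast : (β : ℝ) * (1 / ((a : ℝ) + 1 + n)) = 1 := by
      rw [← hb]; field_simp; ring
    have hsum : ∑ i ∈ Finset.range n, (β : ℝ) * (1 / ((a : ℝ) + 1 + i)) ≤ n • (2 : ℝ) := by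
      rw [← Finset.card_range n, ← Finset.sum_const, Finset.card_range]
      refine Finset.sum_le_sum fun i _ => ?_
      have : (0 : ℝ) ≤ i := by positivity
      rw [mul_one_div, div_le_iff₀ (by positivity)]
      linarith
    rw [hlast]
    simp at hsum ⊢
    linarith
  nlinarith

/-! ### Entropy bound by comparison with the extremal profile -/

/-- Entropy bound for `q = Y ^ β`, with `Y ≤ 1`, when the superlevel measure
`A(y) = |{Y ≥ y}|` divided by the extremal profile `(1/y - 1) ^ n` is nondecreasing (hypothesis
`hA`, cross-multiplied). By the layer cake formula `∫ q` and `∫ (q - q log q)` are the integrals of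
`A` against `β y ^ (β - 1)` and `-β² y ^ (β - 1) log y`. The difference of `2 n + 1` times the first
weight and the second is `β y ^ (β - 1) (2 n + 1 + β log y)`, which changes sign once, so `A` may
be compared with the multiple of the profile that agrees with it at the sign change. -/
lemma entropy_le_of_shrink (n β : ℕ) (hn : 1 ≤ n) (hβ : 2 * n ≤ β) (Y : (Fin n → ℝ) → ℝ)
    (hY0 : ∀ x, 0 ≤ Y x) (hY1 : ∀ x, Y x ≤ 1) (hYm : AEMeasurable Y volume)
    (hq : Integrable fun x => Y x ^ β)
    (hql : Integrable fun x => Y x ^ β * Real.log (Y x ^ β))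
    (hA : ∀ y z : ℝ, 0 < y → y ≤ z → z ≤ 1 →
      (1 / z - 1) ^ n * volume.real {x | y ≤ Y x} ≤ (1 / y - 1) ^ n * volume.real {x | z ≤ Y x}) :
    ∫ x, -(Y x ^ β * Real.log (Y x ^ β)) ≤ 2 * n * ∫ x, Y x ^ β := by
  obtain ⟨a, ha⟩ : ∃ a, a + n + 1 = β := ⟨β - n - 1, by omega⟩
  obtain ⟨b, hb⟩ : ∃ b, b + 1 = β := ⟨β - 1, by omega⟩
  have hba : b = a + n := by omega
  have hbR : (b : ℝ) + 1 = β := by exact_mod_cast hb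
  have hβ0 : (0 : ℝ) < β := by exact_mod_cast (by omega : 0 < β)
  set A : ℝ → ℝ := fun y => volume.real {x | y ≤ Y x} with hAdef
  have hA0 : ∀ y, 0 ≤ A y := fun y => measureReal_nonneg
  have hAfin : ∀ y, 0 < y → volume {x | y ≤ Y x} = ENNReal.ofReal (A y) := by
    intro y hy
    have h := hq.measure_ge_lt_top (ε := y ^ β) (by positivity)
    have hne : volume {x | y ≤ Y x} ≠ ⊤ :=
      ne_top_of_le_ne_top h.ne (measure_mono fun x hx => pow_le_pow_left₀ hy.le hx β)
    rw [hAdef, ofReal_measureReal hne]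
  -- the layer cake formula needs weights that are nonnegative on all of `(0, ∞)`, hence `|log y|`
  set g1 : ℝ → ℝ := fun y => β * y ^ b with hg1
  set g2 : ℝ → ℝ := fun y => β ^ 2 * y ^ b * |Real.log y| with hg2
  have hg1i : ∀ c d, IntervalIntegrable g1 volume c d := fun c d =>
    Continuous.intervalIntegrable (by fun_prop) _ _
  have hg2i : ∀ c d, IntervalIntegrable g2 volume c d := fun c d => by
    apply IntervalIntegrable.continuousOn_mul
    · exact intervalIntegral.intervalIntegrable_log'.abs
    · fun_prop
  have hP : ENNReal.ofReal (∫ x, Y x ^ β) =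
      ∫⁻ y in Set.Ioi (0 : ℝ), volume {x | y ≤ Y x} * ENNReal.ofReal (g1 y) := by
    rw [ofReal_integral_eq_lintegral_ofReal hq (ae_of_all _ fun x => pow_nonneg (hY0 x) _),
      ← lintegral_comp_eq_lintegral_meas_le_mul volume (ae_of_all _ hY0) hYm
        (fun _ _ => hg1i _ _)]
    · refine lintegral_congr fun x => ?_
      congr 1
      simp only [hg1]
      rw [intervalIntegral.integral_const_mul, integral_pow, hbR, hb]
      simp only [zero_pow (by omega : β ≠ 0), sub_zero]
      field_simp
    · filter_upwards [ae_restrict_mem measurableSet_Ioi] with y hy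
      have : (0 : ℝ) < y := hy
      positivity
  have hQi : Integrable fun x => Y x ^ β - Y x ^ β * Real.log (Y x ^ β) := hq.sub hql
  have hQ : ENNReal.ofReal (∫ x, (Y x ^ β - Y x ^ β * Real.log (Y x ^ β))) =
      ∫⁻ y in Set.Ioi (0 : ℝ), volume {x | y ≤ Y x} * ENNReal.ofReal (g2 y) := by
    rw [ofReal_integral_eq_lintegral_ofReal hQi,
      ← lintegral_comp_eq_lintegral_meas_le_mul volume (ae_of_all _ hY0) hYm
        (fun _ _ => hg2i _ _)]
    · refine lintegral_congr fun x => ?_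
      congr 1
      have : ∫ y in (0 : ℝ)..Y x, g2 y = ∫ y in (0 : ℝ)..Y x, -(β : ℝ) ^ 2 * (y ^ b * Real.log y) := by
        refine intervalIntegral.integral_congr fun y hy => ?_
        rw [Set.uIcc_of_le (hY0 x)] at hy
        simp only [hg2]
        rw [abs_of_nonpos (Real.log_nonpos hy.1 (hy.2.trans (hY1 x)))]
        ring
      rw [this, intervalIntegral.integral_const_mul, integral_pow_mul_log b (hY0 x), hbR, hb,
        Real.log_pow]
      field_simp
      ring
    · filter_upwards [ae_restrict_mem measurableSet_Ioi] with y hy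
      have : (0 : ℝ) < y := hy
      positivity
    · refine ae_of_all _ fun x => ?_
      have h1 : 0 ≤ Y x ^ β := pow_nonneg (hY0 x) _
      have := Real.log_nonpos h1 (pow_le_one₀ (hY0 x) (hY1 x))
      simp only [Pi.zero_apply]
      nlinarith
  -- the crossing point, where `2 n + 1 + β log y` changes sign
  set y₁ : ℝ := Real.exp (-((2 * n + 1) / β)) with hy₁
  have hy₁0 : 0 < y₁ := Real.exp_pos _
  have hy₁1 : y₁ < 1 := by
    rw [hy₁, Real.exp_lt_one_iff]
    have : (0 : ℝ) < (2 * n + 1) / β := by positivity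
    linarith
  have hlog : ∀ y, 0 < y → y ≤ y₁ → 2 * n + 1 + β * Real.log y ≤ 0 := by
    intro y hy h
    have := Real.log_le_log hy h
    rw [hy₁, Real.log_exp] at this
    have := mul_le_mul_of_nonneg_left this hβ0.le
    rw [mul_neg, mul_div_cancel₀ _ hβ0.ne'] at this
    linarith
  have hlog' : ∀ y, y₁ ≤ y → 0 ≤ 2 * n + 1 + β * Real.log y := by
    intro y h
    have := Real.log_le_log hy₁0 h
    rw [hy₁, Real.log_exp] at this
    have := mul_le_mul_of_nonneg_left this hβ0.le
    rw [mul_neg, mul_div_cancel₀ _ hβ0.ne'] at this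
    linarith
  have hρ₁ : 0 < (1 / y₁ - 1) ^ n := by
    have : 1 < 1 / y₁ := by rw [lt_div_iff₀ hy₁0]; linarith
    exact pow_pos (by linarith) _
  set c : ℝ := A y₁ / (1 / y₁ - 1) ^ n with hc
  have hc0 : 0 ≤ c := div_nonneg (hA0 _) hρ₁.le
  -- `A` lies below `c (1/y - 1) ^ n` left of `y₁` and above it right of `y₁`
  have hkey : ∀ y ∈ Set.Ioc (0 : ℝ) 1,
      0 ≤ (A y - c * (1 / y - 1) ^ n) * (2 * n + 1 + β * Real.log y) := by
    intro y hy
    rcases le_total y y₁ with h | h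
    · refine mul_nonneg_of_nonpos_of_nonpos ?_ (hlog y hy.1 h)
      have := hA y y₁ hy.1 h hy₁1.le
      rw [hc, div_mul_eq_mul_div, sub_nonpos, le_div_iff₀ hρ₁]
      linarith
    · refine mul_nonneg ?_ (hlog' y h)
      have := hA y₁ y hy₁0 h hy.2
      rw [hc, div_mul_eq_mul_div, sub_nonneg, div_le_iff₀ hρ₁]
      linarith
  -- the profile `c (1/y - 1) ^ n` times the two weights, with the power of `y` cancelled
  set r1 : ℝ → ℝ := fun y => c * β * ((1 - y) ^ n * y ^ a) with hr1
  set r2 : ℝ → ℝ := fun y => c * β ^ 2 * (-((1 - y) ^ n * y ^ a * Real.log y)) with hr2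
  have hr1i : IntegrableOn r1 (Set.Ioc 0 1) :=
    (intervalIntegrable_iff_integrableOn_Ioc_of_le zero_le_one).1
      (Continuous.intervalIntegrable (by fun_prop) _ _)
  have hr2i : IntegrableOn r2 (Set.Ioc 0 1) :=
    (intervalIntegrable_iff_integrableOn_Ioc_of_le zero_le_one).1
      ((intervalIntegrable_beta_log n a 0 1).neg.const_mul _)
  have hr10 : ∀ y ∈ Set.Ioc (0 : ℝ) 1, 0 ≤ r1 y := by
    intro y hy
    have h1 : 0 ≤ 1 - y := by linarith [hy.2]
    have h2 := hy.1.le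
    positivity
  have hr20 : ∀ y ∈ Set.Ioc (0 : ℝ) 1, 0 ≤ r2 y := by
    intro y hy
    have h1 : 0 ≤ 1 - y := by linarith [hy.2]
    have h2 := hy.1.le
    have h3 : 0 ≤ -Real.log y := by linarith [Real.log_nonpos h2 hy.2]
    simp only [hr2]
    rw [← mul_neg]
    positivity
  have hr : ∫ y in Set.Ioc (0 : ℝ) 1, r2 y ≤ (2 * n + 1) * ∫ y in Set.Ioc (0 : ℝ) 1, r1 y := by
    rw [← intervalIntegral.integral_of_le zero_le_one, ← intervalIntegral.integral_of_le zero_le_one]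
    simp only [hr1, hr2]
    rw [intervalIntegral.integral_const_mul, intervalIntegral.integral_const_mul]
    have := mul_le_mul_of_nonneg_left (beta_log_le n a β hβ ha) (mul_nonneg hc0 hβ0.le)
    linarith
  have hpt : ∀ y ∈ Set.Ioc (0 : ℝ) 1,
      volume {x | y ≤ Y x} * ENNReal.ofReal (g2 y) + ENNReal.ofReal ((2 * n + 1) * r1 y) ≤
      ENNReal.ofReal (2 * n + 1) * (volume {x | y ≤ Y x} * ENNReal.ofReal (g1 y)) +
        ENNReal.ofReal (r2 y) := by
    intro y hy
    have hy0 := hy.1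
    have h1 : 0 ≤ g1 y := by positivity
    have h2 : 0 ≤ g2 y := by positivity
    have hn1 : (0 : ℝ) ≤ 2 * n + 1 := by positivity
    rw [hAfin y hy.1, ← ENNReal.ofReal_mul (hA0 y), ← ENNReal.ofReal_mul (hA0 y),
      ← ENNReal.ofReal_mul hn1,
      ← ENNReal.ofReal_add (mul_nonneg (hA0 y) h2) (mul_nonneg hn1 (hr10 y hy)),
      ← ENNReal.ofReal_add (mul_nonneg hn1 (mul_nonneg (hA0 y) h1)) (hr20 y hy)]
    refine ENNReal.ofReal_le_ofReal ?_
    have hk := mul_nonneg (hkey y hy) h1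
    simp only [hg1, hg2, hr1, hr2] at hk ⊢
    rw [abs_of_nonpos (Real.log_nonpos hy0.le hy.2)]
    have hpow : (1 / y - 1) ^ n * y ^ b = (1 - y) ^ n * y ^ a := by
      rw [hba, pow_add, mul_comm (y ^ a), ← mul_assoc, ← mul_pow]
      congr 2
      field_simp
    have : (A y - c * (1 / y - 1) ^ n) * (2 * n + 1 + β * Real.log y) * (β * y ^ b) =
      A y * (2 * n + 1 + β * Real.log y) * (β * y ^ b) -
        c * (2 * n + 1 + β * Real.log y) * β * ((1 / y - 1) ^ n * y ^ b) := by ring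
    rw [this, hpow] at hk
    linarith
  have hP' : ∫⁻ y in Set.Ioc (0 : ℝ) 1, volume {x | y ≤ Y x} * ENNReal.ofReal (g1 y) ≤
      ENNReal.ofReal (∫ x, Y x ^ β) := by
    rw [hP]
    exact lintegral_mono_set fun y hy => hy.1
  have hQ' : ENNReal.ofReal (∫ x, (Y x ^ β - Y x ^ β * Real.log (Y x ^ β))) ≤
      ∫⁻ y in Set.Ioc (0 : ℝ) 1, volume {x | y ≤ Y x} * ENNReal.ofReal (g2 y) := by
    -- `Y ≤ 1`, so the superlevel sets above `1` are empty
    rw [hQ, ← Set.Ioc_union_Ioi_eq_Ioi (zero_le_one (α := ℝ))]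
    refine (lintegral_union_le _ _ _).trans ?_
    have : ∫⁻ y in Set.Ioi (1 : ℝ), volume {x | y ≤ Y x} * ENNReal.ofReal (g2 y) = 0 := by
      rw [setLIntegral_congr_fun (g := fun _ => 0) measurableSet_Ioi]
      · simp
      · intro y hy
        have : {x | y ≤ Y x} = ∅ := by
          ext x
          have : (1 : ℝ) < y := hy
          simp only [Set.mem_ofPred_eq, Set.mem_empty_iff_false, iff_false, not_le]
          linarith [hY1 x]
        simp [this]
    rw [this, add_zero]
  have hint := setLIntegral_mono' (μ := volume) measurableSet_Ioc hpt
  have hm1 : Measurable fun y => ENNReal.ofReal ((2 * n + 1) * r1 y) := by fun_prop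
  have hm2 : Measurable fun y => ENNReal.ofReal (r2 y) := by
    simp only [hr2]
    fun_prop
  have hR1 : ∫⁻ y in Set.Ioc (0 : ℝ) 1, ENNReal.ofReal ((2 * n + 1) * r1 y) =
      ENNReal.ofReal ((2 * n + 1) * ∫ y in Set.Ioc (0 : ℝ) 1, r1 y) := by
    rw [← integral_const_mul, ofReal_integral_eq_lintegral_ofReal (hr1i.const_mul _)]
    filter_upwards [ae_restrict_mem measurableSet_Ioc] with y hy
    have := hr10 y hy
    positivity
  have hR2 : ∫⁻ y in Set.Ioc (0 : ℝ) 1, ENNReal.ofReal (r2 y) =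
      ENNReal.ofReal (∫ y in Set.Ioc (0 : ℝ) 1, r2 y) := by
    rw [ofReal_integral_eq_lintegral_ofReal hr2i]
    filter_upwards [ae_restrict_mem measurableSet_Ioc] with y hy
    exact hr20 y hy
  rw [lintegral_add_right _ hm1, lintegral_add_right _ hm2,
    lintegral_const_mul' _ _ ENNReal.ofReal_ne_top, hR1, hR2] at hint
  have hP0 : 0 ≤ ∫ x, Y x ^ β := integral_nonneg fun x => pow_nonneg (hY0 x) _
  have hQ0 : 0 ≤ ∫ x, (Y x ^ β - Y x ^ β * Real.log (Y x ^ β)) := by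
    refine integral_nonneg fun x => ?_
    have h1 : 0 ≤ Y x ^ β := pow_nonneg (hY0 x) _
    have := Real.log_nonpos h1 (pow_le_one₀ (hY0 x) (hY1 x))
    simp only [Pi.zero_apply]
    nlinarith
  have hr1nn : 0 ≤ ∫ y in Set.Ioc (0 : ℝ) 1, r1 y :=
    setIntegral_nonneg measurableSet_Ioc hr10
  have hr2nn : 0 ≤ ∫ y in Set.Ioc (0 : ℝ) 1, r2 y :=
    setIntegral_nonneg measurableSet_Ioc hr20
  have hn1 : (0 : ℝ) ≤ 2 * n + 1 := by positivity
  have hfinal := (add_le_add_left hQ' _).trans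
    (hint.trans (add_le_add_left (mul_le_mul_right hP' (ENNReal.ofReal (2 * n + 1))) _))
  rw [← ENNReal.ofReal_mul hn1, ← ENNReal.ofReal_add hQ0 (mul_nonneg hn1 hr1nn),
    ← ENNReal.ofReal_add (mul_nonneg hn1 hP0) hr2nn,
    ENNReal.ofReal_le_ofReal_iff (add_nonneg (mul_nonneg hn1 hP0) hr2nn)] at hfinal
  rw [integral_sub hq hql] at hfinal
  rw [integral_neg]
  linarith

/-! ### Superlevel sets of β-concave functions and the entropy gap -/

/-- Superlevel sets of a β-concave function in terms of the heights `t y ^ β`: convexity of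
`g = f ^ (-1/β)` makes the homothety of ratio `(1/z - 1) / (1/y - 1)` centred at a point where
`f > t` carry `{f ≥ t y ^ β}` into `{f ≥ t z ^ β}`. At `z = 1` the left side vanishes since
`n ≥ 1`. -/
lemma betaConcave_shrink {n β : ℕ} (hn : 1 ≤ n) (hβ : 0 < β) {f : (Fin n → ℝ) → ℝ}
    (hf : IsBetaConcave n (β : ℝ) f) {t : ℝ} (ht : 0 < t) {x₀ : Fin n → ℝ} (hx₀ : t < f x₀)
    {y z : ℝ} (hy : 0 < y) (hyz : y ≤ z) (hz : z ≤ 1)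
    (hfin : volume {x | t * z ^ β ≤ f x} ≠ ⊤) :
    (1 / z - 1) ^ n * volume.real {x | t * y ^ β ≤ f x} ≤
      (1 / y - 1) ^ n * volume.real {x | t * z ^ β ≤ f x} := by
  obtain ⟨s, g, hg, hs, hs'⟩ := hf
  have hβ0 : (β : ℝ) ≠ 0 := by exact_mod_cast hβ.ne'
  have hβp : (0 : ℝ) < β := by exact_mod_cast hβ
  have hz0 : 0 < z := hy.trans_le hyz
  rcases hz.eq_or_lt with rfl | hz1
  · have : (0 : ℝ) ^ n = 0 := zero_pow (by omega)
    simp only [div_one, sub_self, this, zero_mul]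
    have : 1 ≤ 1 / y := by rw [le_div_iff₀ hy]; linarith
    have : 0 ≤ 1 / y - 1 := by linarith
    positivity
  -- `a` is the value of `g` at height `t`
  set a : ℝ := t ^ (-(β : ℝ)⁻¹) with ha
  have ha0 : 0 < a := Real.rpow_pos_of_pos ht _
  have hta : t = a ^ (-(β : ℝ)) := by
    rw [ha, ← Real.rpow_mul ht.le]; field_simp; simp
  have hlevel : ∀ v : ℝ, 0 < v → ∀ x, t * v ^ β ≤ f x ↔ x ∈ s ∧ g x ≤ a / v := by
    intro v hv x
    have hav : t * v ^ β = (a / v) ^ (-(β : ℝ)) := by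
      rw [Real.div_rpow ha0.le hv.le, ← hta, Real.rpow_neg hv.le, Real.rpow_natCast]
      field_simp
    by_cases hx : x ∈ s
    · obtain ⟨hgx, hfx⟩ := hs x hx
      rw [hfx, hav, Real.rpow_le_rpow_iff_of_neg (by positivity) hgx (by linarith)]
      simp [hx]
    · rw [hs' x hx]
      have : 0 < t * v ^ β := by positivity
      simp [hx, this]
  have hx₀' : x₀ ∈ s ∧ g x₀ ≤ a := by
    simpa using (hlevel 1 one_pos x₀).1 (by simpa using hx₀.le)
  have h1y : 0 < 1 / y - 1 := by
    have : 1 < 1 / y := by rw [lt_div_iff₀ hy]; linarith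
    linarith
  have h1z : 0 < 1 / z - 1 := by
    have : 1 < 1 / z := by rw [lt_div_iff₀ hz0]; linarith
    linarith
  set r : ℝ := (1 / z - 1) / (1 / y - 1) with hr
  have hr0 : 0 < r := div_pos h1z h1y
  have hr1 : r ≤ 1 := by
    rw [hr, div_le_one h1y]
    have := one_div_le_one_div_of_le hy hyz
    linarith
  have hsub : AffineMap.homothety x₀ r '' {x | t * y ^ β ≤ f x} ⊆ {x | t * z ^ β ≤ f x} := by
    rintro _ ⟨x, hx, rfl⟩
    obtain ⟨hxs, hgx⟩ := (hlevel y hy x).1 hx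
    have heq : AffineMap.homothety x₀ r x = (1 - r) • x₀ + r • x := by
      rw [AffineMap.homothety_apply]
      simp only [vsub_eq_sub, vadd_eq_add]
      module
    refine (hlevel z hz0 _).2 ?_
    rw [heq]
    have h1r : 0 ≤ 1 - r := by linarith
    refine ⟨hg.1 hx₀'.1 hxs h1r hr0.le (by ring), ?_⟩
    refine (hg.2 hx₀'.1 hxs h1r hr0.le (by ring)).trans ?_
    simp only [smul_eq_mul]
    have h1 := mul_le_mul_of_nonneg_left hx₀'.2 h1r
    have h2 := mul_le_mul_of_nonneg_left hgx hr0.le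
    have h3 : (1 - r) * a + r * (a / y) = a / z := by
      have : r * (1 / y - 1) = 1 / z - 1 := div_mul_cancel₀ _ h1y.ne'
      linear_combination a * this
    linarith
  have hvol := measureReal_mono hsub hfin
  rw [measureReal_def, Measure.addHaar_image_homothety, ENNReal.toReal_mul,
    ENNReal.toReal_ofReal (abs_nonneg _), ← measureReal_def, abs_of_nonneg (by positivity)] at hvol
  simp only [Module.finrank_fintype_fun_eq_card, Fintype.card_fin] at hvol
  rw [hr, div_pow, div_mul_eq_mul_div, div_le_iff₀ (by positivity)] at hvol
  linarith

/-- For `n ≥ 1`, an integer `β ≥ 2n`, and a β-concave probability density `f` on `ℝ^n`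
with finite sup-norm `f_max` and finite differential entropy `h(f)`, if `t > 0` satisfies
`∫ min{f, t} = 1/(n+1)` and `h̃` is the differential entropy of the truncated density
`x ↦ (n+1)·min{f(x), t}`, then `h̃ - h(f) ≤ log(f_max/t) + 2n`. -/
theorem truncated_entropy_gap
    (n : ℕ) (hn : 1 ≤ n) (β : ℕ) (hβ : 2 * n ≤ β)
    (f : (Fin n → ℝ) → ℝ) (fmax t : ℝ)
    (hf_prob : (∫ x, f x) = 1)
    (hf : IsBetaConcave n (β : ℝ) f)
    (hfmax : IsLUB (Set.range f) fmax)
    (hent : Integrable (fun x => f x * Real.log (f x)))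
    (ht : 0 < t)
    (htrunc : (∫ x, min (f x) t) = 1 / ((n : ℝ) + 1)) :
    (∫ x, -((((n : ℝ) + 1) * min (f x) t) * Real.log (((n : ℝ) + 1) * min (f x) t))) -
        (∫ x, -(f x * Real.log (f x))) ≤
      Real.log (fmax / t) + 2 * n := by
  have hnR : (1 : ℝ) ≤ n := by exact_mod_cast hn
  have hβ0 : β ≠ 0 := by omega
  have hfi : Integrable f := by
    by_contra h
    rw [integral_undef h] at hf_prob
    norm_num at hf_prob
  have hf0 : ∀ x, 0 ≤ f x := by
    obtain ⟨s, g, -, hs, hs'⟩ := hf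
    intro x
    by_cases hx : x ∈ s
    · rw [(hs x hx).2]
      exact Real.rpow_nonneg (hs x hx).1.le _
    · rw [hs' x hx]
  have hfM : ∀ x, f x ≤ fmax := fun x => hfmax.1 ⟨x, rfl⟩
  -- otherwise `min f t = f`, whose integral is `1 ≠ 1 / (n + 1)`
  obtain ⟨x₀, hx₀⟩ : ∃ x₀, t < f x₀ := by
    by_contra! h
    simp_rw [min_eq_left (h _), hf_prob] at htrunc
    rw [eq_div_iff (by positivity)] at htrunc
    linarith
  have hM : t < fmax := hx₀.trans_le (hfM x₀)
  -- `Y ^ β` is the truncation `min f t` scaled to have maximum `1`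
  set Y : (Fin n → ℝ) → ℝ := fun x => (min (f x) t / t) ^ ((β : ℝ)⁻¹) with hY
  have hq0 : ∀ x, 0 ≤ min (f x) t / t := fun x => div_nonneg (le_min (hf0 x) ht.le) ht.le
  have hYβ : ∀ x, Y x ^ β = min (f x) t / t := fun x => Real.rpow_inv_natCast_pow (hq0 x) hβ0
  have hY0 : ∀ x, 0 ≤ Y x := fun x => Real.rpow_nonneg (hq0 x) _
  have hY1 : ∀ x, Y x ≤ 1 := fun x =>
    Real.rpow_le_one (hq0 x) ((div_le_one ht).2 (min_le_right _ _)) (by positivity)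
  have hmm : AEStronglyMeasurable (fun x => min (f x) t) volume :=
    hfi.aestronglyMeasurable.inf aestronglyMeasurable_const
  have hYm : AEMeasurable Y volume := (hmm.aemeasurable.div_const t).pow_const _
  have hmi : Integrable fun x => min (f x) t := by
    refine hfi.mono' hmm (ae_of_all _ fun x => ?_)
    rw [Real.norm_of_nonneg (le_min (hf0 x) ht.le)]
    exact min_le_left _ _
  have hq : Integrable fun x => Y x ^ β := by
    simp_rw [hYβ]
    exact hmi.div_const t
  -- `|m log m| ≤ |f log f| + |log t| f` for `m = min f t`, whichever of `f`, `t` is smaller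
  have hml : Integrable fun x => min (f x) t * Real.log (min (f x) t) := by
    refine (hent.abs.add (hfi.const_mul |Real.log t|)).mono'
      (hmm.mul hmm.aemeasurable.log.aestronglyMeasurable) (ae_of_all _ fun x => ?_)
    simp only [Pi.add_apply, Real.norm_eq_abs]
    have h2 : 0 ≤ |Real.log t| * f x := mul_nonneg (abs_nonneg _) (hf0 x)
    rcases le_total (f x) t with h | h
    · rw [min_eq_left h]
      linarith
    · rw [min_eq_right h, abs_mul, abs_of_pos ht]
      have := mul_le_mul_of_nonneg_left h (abs_nonneg (Real.log t))
      have := abs_nonneg (f x * Real.log (f x))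
      linarith
  have hlog : ∀ x, Y x ^ β * Real.log (Y x ^ β) =
      t⁻¹ * (min (f x) t * Real.log (min (f x) t)) - Real.log t * Y x ^ β := by
    intro x
    rw [hYβ]
    rcases eq_or_ne (min (f x) t) 0 with h | h
    · simp [h]
    · rw [Real.log_div h ht.ne']
      ring
  have hql : Integrable fun x => Y x ^ β * Real.log (Y x ^ β) := by
    simp_rw [hlog]
    exact (hml.const_mul _).sub (hq.const_mul _)
  have hset : ∀ y : ℝ, 0 < y → y ≤ 1 → {x | y ≤ Y x} = {x | t * y ^ β ≤ f x} := by
    intro y hy hy1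
    ext x
    simp only [Set.mem_ofPred_eq]
    rw [← pow_le_pow_iff_left₀ hy.le (hY0 x) hβ0, hYβ, le_div_iff₀ ht, le_min_iff, mul_comm]
    have : t * y ^ β ≤ t := mul_le_of_le_one_right ht.le (pow_le_one₀ hy.le hy1)
    simp [this]
  have hmain := entropy_le_of_shrink n β hn hβ Y hY0 hY1 hYm hq hql (by
    intro y z hy hyz hz
    have hz0 := hy.trans_le hyz
    rw [hset y hy (hyz.trans hz), hset z hz0 hz]
    exact betaConcave_shrink hn (by omega) hf ht hx₀ hy hyz hz
      (hfi.measure_ge_lt_top (by positivity)).ne)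
  have hqint : ∫ x, Y x ^ β = 1 / ((n : ℝ) + 1) / t := by
    simp_rw [hYβ]
    rw [integral_div, htrunc]
  -- `h̃ = -log ((n + 1) t) + (n + 1) t ∫ -(q log q)` with `q = Y ^ β`
  have htil : ∫ x, -((((n : ℝ) + 1) * min (f x) t) * Real.log (((n : ℝ) + 1) * min (f x) t)) =
      -Real.log (((n : ℝ) + 1) * t) + (n + 1) * t * ∫ x, -(Y x ^ β * Real.log (Y x ^ β)) := by
    have : ∀ x, -((((n : ℝ) + 1) * min (f x) t) * Real.log (((n : ℝ) + 1) * min (f x) t)) =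
        -(((n : ℝ) + 1) * t * Real.log (((n : ℝ) + 1) * t)) * Y x ^ β +
          (n + 1) * t * -(Y x ^ β * Real.log (Y x ^ β)) := by
      intro x
      have hm : ((n : ℝ) + 1) * min (f x) t = ((n : ℝ) + 1) * t * Y x ^ β := by
        rw [hYβ]; field_simp
      rw [hm]
      rcases eq_or_ne (Y x ^ β) 0 with h | h
      · simp [h]
      · rw [Real.log_mul (by positivity) h]
        ring
    have hnql : Integrable fun x => -(Y x ^ β * Real.log (Y x ^ β)) := hql.neg
    simp_rw [this]
    rw [integral_add (hq.const_mul _) (hnql.const_mul _), integral_const_mul,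
      integral_const_mul, hqint]
    field_simp
  have hhf : ∫ x, f x * Real.log (f x) ≤ Real.log fmax := by
    have : ∫ x, f x * Real.log (f x) ≤ ∫ x, f x * Real.log fmax := by
      refine integral_mono hent (hfi.mul_const _) fun x => ?_
      rcases (hf0 x).eq_or_lt with h | h
      · simp [← h]
      · exact mul_le_mul_of_nonneg_left (Real.log_le_log h (hfM x)) h.le
    rwa [integral_mul_const, hf_prob, one_mul] at this
  have hscaled := mul_le_mul_of_nonneg_left hmain (by positivity : 0 ≤ ((n : ℝ) + 1) * t)
  have hone : ((n : ℝ) + 1) * t * (2 * n * ∫ x, Y x ^ β) = 2 * n := by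
    rw [hqint]; field_simp
  rw [hone] at hscaled
  have hlogn : 0 ≤ Real.log ((n : ℝ) + 1) := Real.log_nonneg (by linarith)
  rw [htil, integral_neg (f := fun x => f x * Real.log (f x)),
    Real.log_mul (by positivity) ht.ne', Real.log_div (ht.trans hM).ne' ht.ne']
  linarith
end
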